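/- If a is a ribbon with n nodes all of which are positive, then there exists an extension of a with at most n/2 − 1 critical points in the open unit disk; that is, γ(a) ≤ n/2 − 1. -/

import Mathlib

open scoped RealInnerProductSpace

noncomputable section

abbrev E2 : Type := EuclideanSpace ℝ (Fin 2)

/-- The point (cos t, sin t) on the unit circle in ℝ². -/
def sphPt (t : ℝ) : E2 := (EuclideanSpace.equiv (Fin 2) ℝ).symm ![Real.cos t, Real.sin t]

/-- A ribbon with `n` nodes, encoded via the angle parametrization `g = φ ∘ (cos, sin)`
of a C^∞ function `φ : S¹ → ℝ` whose critical points on the circle are exactly the `n`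
nondegenerate local extrema (nodes) at angles `θ 0 < θ 1 < ⋯ < θ (n-1)` in `[0, 2π)`,
with pairwise distinct critical values, together with a marking `ν` of the nodes by `±1`. -/
structure Ribbon (n : ℕ) : Type where
  g : ℝ → ℝ
  θ : Fin n → ℝ
  ν : Fin n → ℤ
  n_even : Even n
  n_pos : 0 < n
  smooth_g : ContDiff ℝ (⊤ : ℕ∞) g
  periodic_g : Function.Periodic g (2 * Real.pi)
  theta_mem : ∀ i, θ i ∈ Set.Ico (0 : ℝ) (2 * Real.pi)
  theta_mono : StrictMono θ
  node_crit : ∀ i, deriv g (θ i) = 0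
  node_nondeg : ∀ i, deriv (deriv g) (θ i) ≠ 0
  crit_only : ∀ t ∈ Set.Ico (0 : ℝ) (2 * Real.pi), deriv g t = 0 → ∃ i, t = θ i
  values_distinct : ∀ i j, g (θ i) = g (θ j) → i = j
  nu_sign : ∀ i, ν i = 1 ∨ ν i = -1

/-- The signature σ = s₊ − s₋ of a ribbon. -/
def Ribbon.sigma {n : ℕ} (a : Ribbon n) : ℤ := ∑ i, a.ν i

/-- Critical points of `f` in the open unit disk. -/
def critPts (f : E2 → ℝ) : Set E2 :=
  {x | x ∈ Metric.ball (0 : E2) 1 ∧ fderiv ℝ f x = 0}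

/-- `f : ℝ² → ℝ` is an extension of the ribbon `a`: it is C^∞, agrees with `φ` on the unit
circle, has nowhere-vanishing gradient on the circle, and at each node the radial derivative
`⟪∇f(p), p⟫` has sign `ν p` if `p` is a local maximum of `φ` (second derivative of `g`
negative there) and sign `−ν p` if `p` is a local minimum of `φ`. -/
def IsExtension {n : ℕ} (a : Ribbon n) (f : E2 → ℝ) : Prop :=
  ContDiff ℝ (⊤ : ℕ∞) f ∧
  (∀ t : ℝ, f (sphPt t) = a.g t) ∧
  (∀ x ∈ Metric.sphere (0 : E2) 1, fderiv ℝ f x ≠ 0) ∧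
  (∀ i : Fin n,
    (deriv (deriv a.g) (a.θ i) < 0 →
      0 < (a.ν i : ℝ) * ⟪gradient f (sphPt (a.θ i)), sphPt (a.θ i)⟫) ∧
    (0 < deriv (deriv a.g) (a.θ i) →
      (a.ν i : ℝ) * ⟪gradient f (sphPt (a.θ i)), sphPt (a.θ i)⟫ < 0))

/-- The ribbon invariant γ: the infimum, over all extensions `f` of `a`, of the number of
critical points of `f` in the open unit disk (a value in `ℕ∞`). -/
def gammaR {n : ℕ} (a : Ribbon n) : ℕ∞ :=
  sInf {k : ℕ∞ | ∃ f : E2 → ℝ, IsExtension a f ∧ (critPts f).encard = k}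

/-!
A function with prescribed behaviour near the circle is built by induction on the number of pairs
of adjacent extrema. The objects of the induction are *collar extensions* of `g`: functions that
equal `g t + β r * κ t` near the circle, with `β` increasing to `β 1 = 0`. All nodes are positive as
soon as `κ` is positive at the maxima and negative at the minima of `g`.

From a collar extension `g₁ + β κ₁` of another function `g₁`, with `κ₁ * (g - g₁) > 0` at the
critical points of `g₁`, one obtains a collar extension of `g` as follows. First `β κ₁` is turned
off while a small multiple of `g - g₁` is turned on: no critical point appears, because the radial
derivative has a fixed sign at the critical points of `g₁`. Then one moves along
`g₁ + b r * (g - g₁)`, whose critical points are exactly the crossings `g = g₁` with slopes of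
opposite signs.

If `g₁` arises from `g` by cancelling an adjacent maximum and minimum, there is one such crossing,
on the arc between the two. The induction starts from a function with two nodes, to which the same
construction is applied with `g₁` the restriction of an affine function with small gradient: then
there is no crossing with opposite slopes.
-/

open Real Set Filter Topology
open scoped ContDiff

section Periodic

lemma periodic_apply_eq_of_angle_eq {α : Type*} {p : ℝ → α} (hp : Function.Periodic p (2 * π))
    {s t : ℝ} (h : (s : Real.Angle) = t) : p s = p t :=
  congrArg hp.lift h

lemma exists_pos_forall_le_of_periodic {p q : ℝ → ℝ} {T : ℝ} (hT : 0 < T)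
    (hp : Continuous p) (hq : Continuous q) (hpT : Function.Periodic p T)
    (hqT : Function.Periodic q T) (hpq : ∀ t, p t ≤ 0 → 0 < q t) :
    ∃ c > 0, ∀ t, p t ≤ 0 → c ≤ q t := by
  have hcompact : IsCompact (Icc 0 T ∩ {t | p t ≤ 0}) :=
    isCompact_Icc.inter_right (isClosed_le hp continuous_const)
  obtain ⟨c, hc, hcq⟩ := hcompact.exists_forall_le' hq.continuousOn fun t ht ↦ hpq t ht.2
  refine ⟨c, hc, fun t ht ↦ ?_⟩
  have hpair : Function.Periodic (fun t ↦ (p t, q t)) T := fun t ↦ Prod.ext (hpT t) (hqT t)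
  obtain ⟨s, hs, hst⟩ := hpair.exists_mem_Ico₀ hT t
  obtain ⟨hps, hqs⟩ := Prod.ext_iff.1 hst
  simp only at hps hqs
  rw [hqs]
  exact hcq s ⟨Ico_subset_Icc_self hs, hps.symm.trans_le ht⟩

/-- A smooth `2π`-periodic function: a smooth function on the circle, in the angle coordinate. -/
structure SmoothPeriodic (g : ℝ → ℝ) : Prop where
  contDiff : ContDiff ℝ ∞ g
  periodic : Function.Periodic g (2 * π)

namespace SmoothPeriodic

variable {g h : ℝ → ℝ}

lemma continuous (hg : SmoothPeriodic g) : Continuous g := hg.contDiff.continuous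

lemma hasDerivAt (hg : SmoothPeriodic g) (t : ℝ) : HasDerivAt g (deriv g t) t :=
  (hg.contDiff.differentiable (by simp) t).hasDerivAt

lemma deriv (hg : SmoothPeriodic g) : SmoothPeriodic (deriv g) where
  contDiff := (contDiff_infty_iff_deriv.1 hg.contDiff).2
  periodic t := by rw [← deriv_comp_add_const, funext hg.periodic]

lemma sub (hg : SmoothPeriodic g) (hh : SmoothPeriodic h) :
    SmoothPeriodic fun t ↦ g t - h t where
  contDiff := hg.contDiff.sub hh.contDiff
  periodic t := by simp only [hg.periodic t, hh.periodic t]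

lemma deriv_sub (hg : SmoothPeriodic g) (hh : SmoothPeriodic h) (t : ℝ) :
    _root_.deriv (fun t ↦ g t - h t) t = _root_.deriv g t - _root_.deriv h t :=
  ((hg.hasDerivAt t).sub (hh.hasDerivAt t)).deriv

lemma apply_eq_of_angle_eq (hg : SmoothPeriodic g) {s t : ℝ} (hst : (s : Real.Angle) = t) :
    g s = g t :=
  periodic_apply_eq_of_angle_eq hg.periodic hst

lemma exists_forall_abs_le (hg : SmoothPeriodic g) : ∃ M > 0, ∀ t, |g t| ≤ M := by
  obtain ⟨M, hM⟩ :=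
    (hg.periodic.isBounded_of_continuous two_pi_pos.ne' hg.continuous).exists_pos_norm_le
  exact ⟨M, hM.1, fun t ↦ hM.2 _ ⟨t, rfl⟩⟩

end SmoothPeriodic

end Periodic

section SmoothStep

lemma hasDerivAt_expNegInvGlue {x : ℝ} (hx : 0 < x) :
    HasDerivAt expNegInvGlue (expNegInvGlue x / x ^ 2) x := by
  have hexp : HasDerivAt (fun y : ℝ ↦ exp (-y⁻¹)) (expNegInvGlue x / x ^ 2) x := by
    simpa [expNegInvGlue, hx.not_ge, div_eq_mul_inv] using (hasDerivAt_inv hx.ne').neg.exp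
  refine hexp.congr_of_eventuallyEq ?_
  filter_upwards [lt_mem_nhds hx] with y hy
  simp only [expNegInvGlue, hy.not_ge, if_false]

lemma deriv_smoothTransition_pos {x : ℝ} (hx : x ∈ Ioo 0 1) : 0 < deriv smoothTransition x := by
  have hx₁ : 0 < 1 - x := by linarith [hx.2]
  have hleft := hasDerivAt_expNegInvGlue hx.1
  have hright := (hasDerivAt_expNegInvGlue hx₁).comp x ((hasDerivAt_id x).const_sub 1)
  have hpos := expNegInvGlue.pos_of_pos hx.1
  have hpos₁ := expNegInvGlue.pos_of_pos hx₁
  have hquot := hleft.div (hleft.add hright) (by simpa using (add_pos hpos hpos₁).ne')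
  have hderiv := hquot.deriv
  simp only [Pi.add_apply, Function.comp_apply] at hderiv
  change deriv smoothTransition x = _ at hderiv
  rw [hderiv]
  refine div_pos ?_ (by positivity)
  have hsplit : ∀ A B a b : ℝ, A / a * (A + B) - A * (A / a + B / b * -1)
      = A / a * B + A * (B / b) := by intros; ring
  rw [hsplit]
  have := hx.1
  positivity

/-- The smooth transition from `0` (on `t ≤ a`) to `1` (on `t ≥ b`). -/
def smoothStep (a b t : ℝ) : ℝ := smoothTransition ((t - a) / (b - a))

variable {a b t : ℝ}

lemma contDiff_smoothStep (a b : ℝ) : ContDiff ℝ ∞ (smoothStep a b) :=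
  smoothTransition.contDiff.comp ((contDiff_id.sub contDiff_const).div_const _)

lemma smoothStep_eq_zero (hab : a < b) (ht : t ≤ a) : smoothStep a b t = 0 :=
  smoothTransition.zero_of_nonpos (div_nonpos_of_nonpos_of_nonneg (by linarith) (by linarith))

lemma smoothStep_eq_one (hab : a < b) (ht : b ≤ t) : smoothStep a b t = 1 :=
  smoothTransition.one_of_one_le (by rw [le_div_iff₀ (by linarith)]; linarith)

lemma smoothStep_nonneg (a b t : ℝ) : 0 ≤ smoothStep a b t := smoothTransition.nonneg _

lemma smoothStep_le_one (a b t : ℝ) : smoothStep a b t ≤ 1 := smoothTransition.le_one _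

lemma smoothStep_pos (hab : a < b) (ht : a < t) : 0 < smoothStep a b t :=
  smoothTransition.pos_of_pos (div_pos (by linarith) (by linarith))

lemma smoothStep_lt_one (hab : a < b) (ht : t < b) : smoothStep a b t < 1 :=
  smoothTransition.lt_one_of_lt_one (by rw [div_lt_one (by linarith)]; linarith)

lemma monotone_smoothStep (hab : a < b) : Monotone (smoothStep a b) := fun s t hst ↦
  smoothTransition.monotone (by have := sub_pos.2 hab; gcongr)

lemma deriv_smoothStep_nonneg (hab : a < b) (t : ℝ) : 0 ≤ deriv (smoothStep a b) t :=
  (monotone_smoothStep hab).deriv_nonneg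

lemma deriv_smoothStep_eq_zero (hab : a < b) (ht : t ∉ Ioo a b) :
    deriv (smoothStep a b) t = 0 := by
  rcases le_or_gt t a with hta | hat
  · refine IsLocalMin.deriv_eq_zero (Eventually.of_forall fun s ↦ ?_)
    simpa only [smoothStep_eq_zero hab hta] using smoothStep_nonneg a b s
  · refine IsLocalMax.deriv_eq_zero (Eventually.of_forall fun s ↦ ?_)
    have hbt : b ≤ t := not_lt.1 fun htb ↦ ht ⟨hat, htb⟩
    simpa only [smoothStep_eq_one hab hbt] using smoothStep_le_one a b s

lemma deriv_smoothStep_pos (ht : t ∈ Ioo a b) : 0 < deriv (smoothStep a b) t := by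
  have hba : 0 < b - a := by linarith [ht.1, ht.2]
  have hmem : (t - a) / (b - a) ∈ Ioo (0 : ℝ) 1 :=
    ⟨div_pos (by linarith [ht.1]) hba, by rw [div_lt_one hba]; linarith [ht.2]⟩
  have hS : HasDerivAt smoothTransition _ ((t - a) / (b - a)) :=
    (smoothTransition.contDiff.differentiable one_ne_zero _).hasDerivAt
  have hderiv := (hS.comp t (((hasDerivAt_id t).sub_const a).div_const (b - a))).deriv
  change deriv (smoothStep a b) t = _ at hderiv
  rw [hderiv]
  have := deriv_smoothTransition_pos hmem
  positivity

end SmoothStep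

section Interpolation

/-- The smooth function with value `w i` at the point `x i` for `i ≤ N`, obtained by joining
consecutive values by smooth transitions; it is constant outside `[x 0, x N]`. -/
def interpolant (x w : ℕ → ℝ) (N : ℕ) (t : ℝ) : ℝ :=
  w 0 + ∑ i ∈ Finset.range N, (w (i + 1) - w i) * smoothStep (x i) (x (i + 1)) t

variable {x : ℕ → ℝ} (w : ℕ → ℝ) {N j : ℕ} {t : ℝ}

lemma contDiff_interpolant (x w : ℕ → ℝ) (N : ℕ) : ContDiff ℝ ∞ (interpolant x w N) :=
  contDiff_const.add (ContDiff.sum fun _ _ ↦ contDiff_const.mul (contDiff_smoothStep _ _))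

lemma interpolant_of_le (hx : StrictMono x) (ht : t ≤ x 0) : interpolant x w N t = w 0 := by
  rw [interpolant, add_eq_left]
  refine Finset.sum_eq_zero fun i _ ↦ ?_
  rw [smoothStep_eq_zero (hx i.lt_succ_self) (ht.trans (hx.monotone i.zero_le)), mul_zero]

lemma interpolant_of_ge (hx : StrictMono x) (ht : x N ≤ t) : interpolant x w N t = w N := by
  rw [interpolant, Finset.sum_congr rfl (g := fun i ↦ w (i + 1) - w i) fun i hi ↦ ?_,
    Finset.sum_range_sub, add_sub_cancel]
  have hiN : i + 1 ≤ N := Finset.mem_range.1 hi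
  rw [smoothStep_eq_one (hx i.lt_succ_self) ((hx.monotone hiN).trans ht), mul_one]

lemma interpolant_apply_node (hx : StrictMono x) (hj : j ≤ N) :
    interpolant x w N (x j) = w j := by
  have hvanish : ∀ i ∈ Finset.range N, i ∉ Finset.range j →
      (w (i + 1) - w i) * smoothStep (x i) (x (i + 1)) (x j) = 0 := fun i _ hi ↦ by
    rw [smoothStep_eq_zero (hx i.lt_succ_self)
      (hx.monotone (not_lt.1 (Finset.mem_range.not.1 hi))), mul_zero]
  rw [interpolant, ← Finset.sum_subset (Finset.range_mono hj) hvanish, ← interpolant,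
    interpolant_of_ge w hx le_rfl]

lemma deriv_interpolant (hx : StrictMono x) (hj : j < N) (ht : t ∈ Icc (x j) (x (j + 1))) :
    deriv (interpolant x w N) t = (w (j + 1) - w j) * deriv (smoothStep (x j) (x (j + 1))) t := by
  have hsmooth : ∀ i, DifferentiableAt ℝ (smoothStep (x i) (x (i + 1))) t := fun i ↦
    (contDiff_smoothStep _ _).differentiable (by simp) t
  have hderiv := (HasDerivAt.fun_sum (u := Finset.range N) fun i _ ↦
    (hsmooth i).hasDerivAt.const_mul (w (i + 1) - w i)).const_add (w 0)
  change HasDerivAt (interpolant x w N) _ t at hderiv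
  rw [hderiv.deriv]
  refine Finset.sum_eq_single_of_mem j (Finset.mem_range.2 hj) fun i _ hij ↦ ?_
  rw [deriv_smoothStep_eq_zero (hx i.lt_succ_self), mul_zero]
  rcases hij.lt_or_gt with h | h
  · exact fun hmem ↦ (hmem.2.trans_le (hx.monotone h)).not_ge ht.1
  · exact fun hmem ↦ (hmem.1.trans_le' (hx.monotone h)).not_ge ht.2

end Interpolation

section Periodization

variable {H : ℝ → ℝ} {x₀ c T : ℝ}

lemma comp_toIcoMod_eventuallyEq (hT : 0 < T) (hleft : ∀ t ≤ x₀, H t = c)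
    (hright : ∀ t, x₀ + T ≤ t → H t = c) (t₀ : ℝ) :
    ∃ a : ℝ, (fun t ↦ H (toIcoMod hT x₀ t)) =ᶠ[𝓝 t₀] fun t ↦ H (t - a) + H (t - a + T) - c := by
  set m := toIcoDiv hT x₀ t₀
  have hmem : t₀ - m • T ∈ Ico x₀ (x₀ + T) := sub_toIcoDiv_zsmul_mem_Ico hT x₀ t₀
  refine ⟨m • T, ?_⟩
  filter_upwards [Ioo_mem_nhds (show x₀ - T + m • T < t₀ by linarith [hmem.1])
    (show t₀ < x₀ + T + m • T by linarith [hmem.2])] with t ht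
  rcases le_or_gt x₀ (t - m • T) with h | h
  · rw [hright (t - m • T + T) (by linarith), add_sub_cancel_right]
    congr 1
    exact (toIcoMod_eq_iff hT).2 ⟨⟨h, by linarith [ht.2]⟩, m, by abel⟩
  · rw [hleft (t - m • T) h.le, add_sub_cancel_left]
    congr 1
    exact (toIcoMod_eq_iff hT).2
      ⟨⟨by linarith [ht.1], by linarith⟩, m - 1, by rw [sub_smul, one_smul]; abel⟩

lemma exists_smoothPeriodic_eqOn (hH : ContDiff ℝ ∞ H) (hleft : ∀ t ≤ x₀, H t = c)
    (hright : ∀ t, x₀ + 2 * π ≤ t → H t = c) :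
    ∃ G, SmoothPeriodic G ∧ EqOn G H (Icc x₀ (x₀ + 2 * π)) := by
  refine ⟨fun t ↦ H (toIcoMod two_pi_pos x₀ t), ⟨?_, ?_⟩, fun t ht ↦ ?_⟩
  · refine contDiff_iff_contDiffAt.2 fun t₀ ↦ ?_
    obtain ⟨a, ha⟩ := comp_toIcoMod_eventuallyEq two_pi_pos hleft hright t₀
    have hshift : ContDiff ℝ ∞ fun t : ℝ ↦ t - a := contDiff_id.sub contDiff_const
    exact (((hH.comp hshift).add (hH.comp (hshift.add contDiff_const))).sub
      contDiff_const).contDiffAt.congr_of_eventuallyEq ha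
  · exact fun t ↦ congrArg H (toIcoMod_add_right two_pi_pos x₀ t)
  · rcases ht.2.lt_or_eq with h | rfl
    · exact congrArg H ((toIcoMod_eq_self two_pi_pos).2 ⟨ht.1, h⟩)
    · simp only [toIcoMod_add_right, toIcoMod_apply_left, hleft x₀ le_rfl, hright _ le_rfl]

end Periodization

section Polar

variable {f : E2 → ℝ} {r t : ℝ}

lemma sphPt_eq_of_angle_eq {s t : ℝ} (h : (s : Real.Angle) = t) : sphPt s = sphPt t :=
  periodic_apply_eq_of_angle_eq (fun s ↦ by simp only [sphPt, cos_add_two_pi, sin_add_two_pi]) h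

lemma norm_sphPt (t : ℝ) : ‖sphPt t‖ = 1 := by
  simp [EuclideanSpace.norm_eq, Fin.sum_univ_two, sphPt]

lemma norm_smul_sphPt (hr : 0 ≤ r) (t : ℝ) : ‖r • sphPt t‖ = r := by
  rw [norm_smul, norm_sphPt, mul_one, norm_of_nonneg hr]

/-- The identification of the plane with `ℂ`. -/
def complexCoord : E2 ≃ₗᵢ[ℝ] ℂ := Complex.orthonormalBasisOneI.repr.symm

lemma complexCoord_sphPt (t : ℝ) :
    complexCoord (sphPt t) = Complex.cos t + Complex.sin t * Complex.I := by
  simp [complexCoord, sphPt, Complex.orthonormalBasisOneI_repr_symm_apply]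

/-- The polar angle of a point of the plane, in `(-π, π]`; it is `0` at the origin. -/
def polarAngle (x : E2) : ℝ := Complex.arg (complexCoord x)

lemma norm_smul_sphPt_polarAngle (x : E2) : ‖x‖ • sphPt (polarAngle x) = x := by
  apply complexCoord.injective
  rw [map_smul, complexCoord_sphPt, ← complexCoord.norm_map, Complex.real_smul]
  exact Complex.norm_mul_cos_add_sin_mul_I _

lemma polarAngle_smul_sphPt (hr : 0 < r) (t : ℝ) :
    (polarAngle (r • sphPt t) : Real.Angle) = t := by
  rw [polarAngle, map_smul, complexCoord_sphPt, Complex.real_smul]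
  exact_mod_cast Complex.arg_mul_cos_add_sin_mul_I_coe_angle hr t

lemma contDiffAt_arg {z : ℂ} (hz : z ∈ Complex.slitPlane) : ContDiffAt ℝ ∞ Complex.arg z := by
  simpa only [Function.comp_def, Complex.imCLM_apply, Complex.log_im] using
    Complex.imCLM.contDiff.contDiffAt.comp z ((Complex.contDiffAt_log hz).restrict_scalars ℝ)

lemma SmoothPeriodic.contDiffAt_comp_polarAngle {g : ℝ → ℝ} (hg : SmoothPeriodic g) {x : E2}
    (hx : x ≠ 0) : ContDiffAt ℝ ∞ (fun y ↦ g (polarAngle y)) x := by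
  have hcoord := complexCoord.contDiff.contDiffAt (n := ∞) (x := x)
  have hne : ∀ {y : E2}, y ≠ 0 → complexCoord y ≠ 0 := (map_ne_zero_iff _ complexCoord.injective).2
  rcases Complex.mem_slitPlane_or_neg_mem_slitPlane (hne hx) with h | h
  · exact hg.contDiff.contDiffAt.comp x ((contDiffAt_arg h).comp x hcoord)
  · have hflip : ContDiffAt ℝ ∞ (fun y ↦ g (Complex.arg (-complexCoord y) + π)) x :=
      hg.contDiff.contDiffAt.comp x
        (((contDiffAt_arg h).comp x hcoord.neg).add contDiffAt_const)
    refine hflip.congr_of_eventuallyEq ?_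
    filter_upwards [isOpen_ne.mem_nhds hx] with y hy
    refine hg.apply_eq_of_angle_eq ?_
    rw [Real.Angle.coe_add, Complex.arg_neg_coe_angle (hne hy), add_assoc,
      Real.Angle.coe_pi_add_coe_pi, add_zero, polarAngle]

/-- The function `u(r) g(t)` of the polar coordinates `(r, t)`. -/
def polarTerm (u g : ℝ → ℝ) (x : E2) : ℝ := u ‖x‖ * g (polarAngle x)

lemma SmoothPeriodic.polarTerm_smul_sphPt {g : ℝ → ℝ} (hg : SmoothPeriodic g) (u : ℝ → ℝ)
    (hr : 0 < r) (t : ℝ) : polarTerm u g (r • sphPt t) = u r * g t := by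
  rw [polarTerm, norm_smul_sphPt hr.le, hg.apply_eq_of_angle_eq (polarAngle_smul_sphPt hr t)]

lemma SmoothPeriodic.contDiff_polarTerm {u g : ℝ → ℝ} {r₁ : ℝ} (hg : SmoothPeriodic g)
    (hu : ContDiff ℝ ∞ u) (hr₁ : 0 < r₁) (hur₁ : ∀ r ≤ r₁, u r = 0) :
    ContDiff ℝ ∞ (polarTerm u g) := by
  refine contDiff_iff_contDiffAt.2 fun x ↦ ?_
  rcases eq_or_ne x 0 with rfl | hx
  · refine (contDiffAt_const (c := (0 : ℝ))).congr_of_eventuallyEq ?_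
    filter_upwards [Metric.ball_mem_nhds (0 : E2) hr₁] with x hx
    rw [polarTerm, hur₁ ‖x‖ (mem_ball_zero_iff.1 hx).le, zero_mul]
  · exact (hu.contDiffAt.comp x (contDiffAt_norm ℝ hx)).mul (hg.contDiffAt_comp_polarAngle hx)

lemma differentiable_sphPt : Differentiable ℝ sphPt := by
  refine (EuclideanSpace.equiv (Fin 2) ℝ).symm.differentiable.comp (differentiable_pi.2 fun i ↦ ?_)
  fin_cases i
  exacts [differentiable_cos, differentiable_sin]

lemma hasDerivAt_comp_smul_sphPt_radial (hf : DifferentiableAt ℝ f (r • sphPt t)) :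
    HasDerivAt (fun s ↦ f (s • sphPt t)) (fderiv ℝ f (r • sphPt t) (sphPt t)) r := by
  simpa only [Function.comp_def, id_eq, one_smul] using
    hf.hasFDerivAt.comp_hasDerivAt r ((hasDerivAt_id r).smul_const (sphPt t))

lemma hasDerivAt_comp_smul_sphPt_angular (hf : DifferentiableAt ℝ f (r • sphPt t)) :
    HasDerivAt (fun s ↦ f (r • sphPt s)) (fderiv ℝ f (r • sphPt t) (r • deriv sphPt t)) t :=
  hf.hasFDerivAt.comp_hasDerivAt t ((differentiable_sphPt t).hasDerivAt.const_smul r)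

end Polar

section Collar

/-- A smooth function on the plane that equals `g t + β r * κ t` in polar coordinates on a collar
`r > r₀` of the unit circle, where `β` increases to `β 1 = 0`. It restricts to `g` on the circle,
and its radial derivative there has the sign of `κ`. -/
structure CollarExtension (g κ : ℝ → ℝ) where
  toFun : E2 → ℝ
  β : ℝ → ℝ
  r₀ : ℝ
  r₀_pos : 0 < r₀
  r₀_lt_one : r₀ < 1
  contDiff : ContDiff ℝ ∞ toFun
  contDiff_β : ContDiff ℝ ∞ β
  β_one : β 1 = 0
  deriv_β_pos : ∀ r ∈ Ioc r₀ 1, 0 < deriv β r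
  polar_eq : ∀ r > r₀, ∀ t, toFun (r • sphPt t) = g t + β r * κ t

/-- A pair of radial functions used to replace the term `β r * κ₁ t` of a collar extension by
`b r * h t`: on `[r₁, r₂)` the coefficient `α` is increased from `β` to `0` while `b` starts
slowly at `0`, both being bounded by `η`, and on `[r₂, 1]` the coefficient `b` increases to `1`. -/
structure CollarProfile (β : ℝ → ℝ) (r₀ η : ℝ) where
  α : ℝ → ℝ
  b : ℝ → ℝ
  r₁ : ℝ
  r₂ : ℝ
  r₀_lt_r₁ : r₀ < r₁
  r₁_lt_r₂ : r₁ < r₂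
  r₂_lt_one : r₂ < 1
  contDiff_α : ContDiff ℝ ∞ α
  contDiff_b : ContDiff ℝ ∞ b
  α_eq_of_le : ∀ r ≤ r₁, α r = β r
  b_eq_of_le : ∀ r ≤ r₁, b r = 0
  deriv_α_pos : ∀ r ∈ Ico r₁ r₂, 0 < deriv α r
  deriv_b_nonneg : ∀ r ∈ Ico r₁ r₂, 0 ≤ deriv b r
  abs_α_le : ∀ r ∈ Ico r₁ r₂, |α r| ≤ η
  abs_b_le : ∀ r ∈ Ico r₁ r₂, |b r| ≤ η
  α_eq_of_ge : ∀ r ≥ r₂, α r = 0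
  deriv_α_eq_of_ge : ∀ r ≥ r₂, deriv α r = 0
  b_one : b 1 = 1
  b_pos : ∀ r ∈ Icc r₂ 1, 0 < b r
  deriv_b_pos : ∀ r ∈ Icc r₂ 1, 0 < deriv b r

namespace CollarProfile

variable {β : ℝ → ℝ} {r₀ η : ℝ}

lemma strictMonoOn_b (P : CollarProfile β r₀ η) : StrictMonoOn P.b (Icc P.r₂ 1) :=
  strictMonoOn_of_deriv_pos (convex_Icc _ _) P.contDiff_b.continuous.continuousOn fun r hr ↦
    P.deriv_b_pos r (interior_subset hr)

lemma b_lt_one (P : CollarProfile β r₀ η) {r : ℝ} (hr : r ∈ Ico P.r₂ 1) : P.b r < 1 := by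
  rw [← P.b_one]
  exact P.strictMonoOn_b (Ico_subset_Icc_self hr) ⟨P.r₂_lt_one.le, le_rfl⟩ hr.2

lemma exists_start (hβ : ContDiff ℝ ∞ β) (hβ₁ : β 1 = 0) (hβ' : ∀ r ∈ Ioc r₀ 1, 0 < deriv β r)
    (hr₀ : r₀ < 1) (hη : 0 < η) :
    ∃ r₁ ∈ Ioo r₀ 1, ∀ r ∈ Ico r₁ 1, 0 < deriv β r ∧ β r < 0 ∧ |β r| ≤ η := by
  have hmono : StrictMonoOn β (Icc r₀ 1) :=
    strictMonoOn_of_deriv_pos (convex_Icc _ _) hβ.continuous.continuousOn fun r hr ↦ by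
      rw [interior_Icc] at hr
      exact hβ' r (Ioo_subset_Ioc_self hr)
  have hsmall : ∀ᶠ r in 𝓝[<] 1, -η < β r :=
    (hβ.continuous.continuousAt.eventually_const_lt (by rw [hβ₁]; linarith)).filter_mono
      nhdsWithin_le_nhds
  obtain ⟨r₁, hr₁, hmem⟩ := (hsmall.and (Ioo_mem_nhdsLT hr₀)).exists
  refine ⟨r₁, hmem, fun r hr ↦ ?_⟩
  have hr_mem : r ∈ Icc r₀ 1 := ⟨hmem.1.le.trans hr.1, hr.2.le⟩
  have hneg : β r < 0 := hβ₁ ▸ hmono hr_mem (right_mem_Icc.2 hr₀.le) hr.2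
  have hle : β r₁ ≤ β r := hmono.monotoneOn (Ioo_subset_Icc_self hmem) hr_mem hr.1
  exact ⟨hβ' r ⟨hmem.1.trans_le hr.1, hr.2.le⟩, hneg, abs_le.2 ⟨by linarith, by linarith⟩⟩

/-- The coefficient `β`, switched off smoothly on `[r₁, r₂]`. -/
def cutoff (β : ℝ → ℝ) (r₁ r₂ r : ℝ) : ℝ := β r * (1 - smoothStep r₁ r₂ r)

section Cutoff

variable {r r₁ r₂ : ℝ}

lemma deriv_cutoff (hβ : ContDiff ℝ ∞ β) (r₁ r₂ r : ℝ) : deriv (cutoff β r₁ r₂) r =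
    deriv β r * (1 - smoothStep r₁ r₂ r) + -β r * deriv (smoothStep r₁ r₂) r := by
  have hstep := ((contDiff_smoothStep r₁ r₂).differentiable (by simp) r).hasDerivAt
  have hderiv := ((hβ.differentiable (by simp) r).hasDerivAt.mul (hstep.const_sub 1)).deriv
  change deriv (cutoff β r₁ r₂) r = _ at hderiv
  rw [hderiv]
  ring

lemma deriv_cutoff_pos (hβ : ContDiff ℝ ∞ β) (h₁₂ : r₁ < r₂) (hr : r < r₂)
    (hβ' : 0 < deriv β r) (hneg : β r < 0) : 0 < deriv (cutoff β r₁ r₂) r := by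
  rw [deriv_cutoff hβ]
  exact add_pos_of_pos_of_nonneg (mul_pos hβ' (sub_pos.2 (smoothStep_lt_one h₁₂ hr)))
    (mul_nonneg (by linarith) (deriv_smoothStep_nonneg h₁₂ r))

lemma deriv_cutoff_of_ge (hβ : ContDiff ℝ ∞ β) (h₁₂ : r₁ < r₂) (hr : r₂ ≤ r) :
    deriv (cutoff β r₁ r₂) r = 0 := by
  rw [deriv_cutoff hβ, smoothStep_eq_one h₁₂ hr,
    deriv_smoothStep_eq_zero h₁₂ fun hmem ↦ hmem.2.not_ge hr]
  ring

lemma abs_cutoff_le (β : ℝ → ℝ) (r₁ r₂ r : ℝ) : |cutoff β r₁ r₂ r| ≤ |β r| := by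
  have hle := smoothStep_le_one r₁ r₂ r
  have hnonneg := smoothStep_nonneg r₁ r₂ r
  rw [cutoff, abs_mul]
  exact mul_le_of_le_one_right (abs_nonneg _) (abs_le.2 ⟨by linarith, by linarith⟩)

end Cutoff

/-- A smooth function vanishing on `r ≤ r₁` and increasing on `[r₁, 1]` to the value `1`. -/
def ramp (r₁ r : ℝ) : ℝ := smoothStep r₁ (2 - r₁) r / smoothStep r₁ (2 - r₁) 1

section Ramp

variable {r r₁ : ℝ}

lemma contDiff_ramp (r₁ : ℝ) : ContDiff ℝ ∞ (ramp r₁) := (contDiff_smoothStep _ _).div_const _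

lemma ramp_eq_zero (hr₁ : r₁ < 1) (hr : r ≤ r₁) : ramp r₁ r = 0 := by
  rw [ramp, smoothStep_eq_zero (by linarith) hr, zero_div]

lemma ramp_one (hr₁ : r₁ < 1) : ramp r₁ 1 = 1 :=
  div_self (smoothStep_pos (by linarith) hr₁).ne'

lemma ramp_pos (hr₁ : r₁ < 1) (hr : r₁ < r) : 0 < ramp r₁ r :=
  div_pos (smoothStep_pos (by linarith) hr) (smoothStep_pos (by linarith) hr₁)

lemma monotone_ramp (hr₁ : r₁ < 1) : Monotone (ramp r₁) :=
  (monotone_smoothStep (by linarith)).div_const (smoothStep_nonneg _ _ _)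

lemma deriv_ramp_pos (hr : r ∈ Ioc r₁ 1) : 0 < deriv (ramp r₁) r := by
  have hr₁ : r₁ < 1 := hr.1.trans_le hr.2
  have hderiv : deriv (ramp r₁) r =
    deriv (smoothStep r₁ (2 - r₁)) r / smoothStep r₁ (2 - r₁) 1 := deriv_div_const _
  rw [hderiv]
  exact div_pos (deriv_smoothStep_pos ⟨hr.1, by linarith [hr.2]⟩)
    (smoothStep_pos (by linarith) hr₁)

end Ramp

lemma nonempty (hβ : ContDiff ℝ ∞ β) (hβ₁ : β 1 = 0) (hβ' : ∀ r ∈ Ioc r₀ 1, 0 < deriv β r)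
    (hr₀ : r₀ < 1) (hη : 0 < η) : Nonempty (CollarProfile β r₀ η) := by
  obtain ⟨r₁, ⟨hr₀₁, hr₁⟩, hβr⟩ := exists_start hβ hβ₁ hβ' hr₀ hη
  have hsmall : ∀ᶠ r in 𝓝[>] r₁, ramp r₁ r < η :=
    ((contDiff_ramp r₁).continuous.continuousAt.eventually_lt_const
      (by rwa [ramp_eq_zero hr₁ le_rfl])).filter_mono nhdsWithin_le_nhds
  obtain ⟨r₂, hr₂, hr₁₂, hr₂₁⟩ := (hsmall.and (Ioo_mem_nhdsGT hr₁)).exists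
  have hmono := monotone_ramp hr₁
  exact ⟨{
    α := cutoff β r₁ r₂
    b := ramp r₁
    r₁ := r₁
    r₂ := r₂
    r₀_lt_r₁ := hr₀₁
    r₁_lt_r₂ := hr₁₂
    r₂_lt_one := hr₂₁
    contDiff_α := hβ.mul (contDiff_const.sub (contDiff_smoothStep _ _))
    contDiff_b := contDiff_ramp r₁
    α_eq_of_le := fun r hr ↦ by rw [cutoff, smoothStep_eq_zero hr₁₂ hr, sub_zero, mul_one]
    b_eq_of_le := fun r hr ↦ ramp_eq_zero hr₁ hr
    deriv_α_pos := fun r hr ↦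
      have ⟨hpos, hneg, _⟩ := hβr r ⟨hr.1, hr.2.trans hr₂₁⟩
      deriv_cutoff_pos hβ hr₁₂ hr.2 hpos hneg
    deriv_b_nonneg := fun _ _ ↦ hmono.deriv_nonneg
    abs_α_le := fun r hr ↦
      (abs_cutoff_le β r₁ r₂ r).trans (hβr r ⟨hr.1, hr.2.trans hr₂₁⟩).2.2
    abs_b_le := fun r hr ↦ by
      rw [abs_of_nonneg (ramp_eq_zero hr₁ le_rfl ▸ hmono hr.1)]
      exact (hmono hr.2.le).trans hr₂.le
    α_eq_of_ge := fun r hr ↦ by rw [cutoff, smoothStep_eq_one hr₁₂ hr, sub_self, mul_zero]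
    deriv_α_eq_of_ge := fun _ hr ↦ deriv_cutoff_of_ge hβ hr₁₂ hr
    b_one := ramp_one hr₁
    b_pos := fun r hr ↦ ramp_pos hr₁ (hr₁₂.trans_le hr.1)
    deriv_b_pos := fun r hr ↦ deriv_ramp_pos ⟨hr₁₂.trans_le hr.1, hr.2⟩ }⟩

end CollarProfile

lemma exists_pos_deriv_add_ne_zero {g₁ κ₁ h : ℝ → ℝ} (hg₁ : SmoothPeriodic g₁)
    (hκ₁ : SmoothPeriodic κ₁) (hh : SmoothPeriodic h)
    (hcrit : ∀ t, deriv g₁ t = 0 → 0 < κ₁ t * h t) :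
    ∃ η > 0, ∀ a c t, |a| ≤ η → |c| ≤ η → κ₁ t * h t ≤ 0 →
      deriv g₁ t + a * deriv κ₁ t + c * deriv h t ≠ 0 := by
  obtain ⟨δ, hδ, hδ_le⟩ := exists_pos_forall_le_of_periodic two_pi_pos
    (hκ₁.continuous.mul hh.continuous) hg₁.deriv.continuous.abs
    (hκ₁.periodic.mul hh.periodic) (hg₁.deriv.periodic.comp abs)
    fun t ht ↦ abs_pos.2 fun h₀ ↦ (hcrit t h₀).not_ge ht
  obtain ⟨M, hM, hκ₁M⟩ := hκ₁.deriv.exists_forall_abs_le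
  obtain ⟨M', hM', hhM'⟩ := hh.deriv.exists_forall_abs_le
  refine ⟨δ / (2 * (M + M')), by positivity, fun a c t ha hc ht h₀ ↦ ?_⟩
  have hsmall : |a * deriv κ₁ t + c * deriv h t| ≤ δ / 2 := calc
    _ ≤ |a| * |deriv κ₁ t| + |c| * |deriv h t| := by
      simpa only [abs_mul] using abs_add_le (a * deriv κ₁ t) (c * deriv h t)
    _ ≤ δ / (2 * (M + M')) * M + δ / (2 * (M + M')) * M' := by gcongr; exacts [hκ₁M t, hhM' t]
    _ = δ / 2 := by field_simp
  have hopp : deriv g₁ t = -(a * deriv κ₁ t + c * deriv h t) := by linarith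
  have := hδ_le t ht
  rw [hopp, abs_neg] at this
  linarith

/-- The angles at which `g` and `g₁` cross with slopes of opposite signs. -/
def oppositeCrossings (g g₁ : ℝ → ℝ) : Set Real.Angle :=
  (↑) '' {t : ℝ | g t = g₁ t ∧ deriv g t * deriv g₁ t < 0}

namespace CollarExtension

variable {g g₁ κ₁ h : ℝ → ℝ} {η r t : ℝ}

/-- The extension of `g₁ + h` obtained from a collar extension of `g₁` by following a collar
profile. -/
def glue (E : CollarExtension g₁ κ₁) (P : CollarProfile E.β E.r₀ η) (h : ℝ → ℝ) (x : E2) : ℝ :=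
  E.toFun x + polarTerm (fun r ↦ P.α r - E.β r) κ₁ x + polarTerm P.b h x

variable (E : CollarExtension g₁ κ₁) (P : CollarProfile E.β E.r₀ η)

lemma contDiff_glue (hκ₁ : SmoothPeriodic κ₁) (hh : SmoothPeriodic h) :
    ContDiff ℝ ∞ (E.glue P h) := by
  have hr₁ : 0 < P.r₁ := E.r₀_pos.trans P.r₀_lt_r₁
  exact (E.contDiff.add (hκ₁.contDiff_polarTerm (P.contDiff_α.sub E.contDiff_β) hr₁
    fun r hr ↦ sub_eq_zero.2 (P.α_eq_of_le r hr))).add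
      (hh.contDiff_polarTerm P.contDiff_b hr₁ P.b_eq_of_le)

lemma glue_smul_sphPt (hκ₁ : SmoothPeriodic κ₁) (hh : SmoothPeriodic h) (hr : E.r₀ < r) (t : ℝ) :
    E.glue P h (r • sphPt t) = g₁ t + P.α r * κ₁ t + P.b r * h t := by
  have hr₀ : 0 < r := E.r₀_pos.trans hr
  rw [glue, E.polar_eq r hr, hκ₁.polarTerm_smul_sphPt _ hr₀, hh.polarTerm_smul_sphPt _ hr₀]
  ring

lemma glue_eq_of_norm_le {x : E2} (hx : ‖x‖ ≤ P.r₁) : E.glue P h x = E.toFun x := by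
  rw [glue, polarTerm, polarTerm, P.α_eq_of_le _ hx, P.b_eq_of_le _ hx]
  ring

lemma deriv_eq_zero_of_fderiv_glue_eq_zero (hg₁ : SmoothPeriodic g₁) (hκ₁ : SmoothPeriodic κ₁)
    (hh : SmoothPeriodic h) (hr : E.r₀ < r) (hcrit : fderiv ℝ (E.glue P h) (r • sphPt t) = 0) :
    deriv g₁ t + P.α r * deriv κ₁ t + P.b r * deriv h t = 0 ∧
      deriv P.α r * κ₁ t + deriv P.b r * h t = 0 := by
  have hdiff := (E.contDiff_glue P hκ₁ hh).differentiable (by simp) (r • sphPt t)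
  constructor
  · have hangular := hasDerivAt_comp_smul_sphPt_angular hdiff
    rw [hcrit, zero_apply] at hangular
    refine HasDerivAt.unique ?_ hangular
    simp only [E.glue_smul_sphPt P hκ₁ hh hr]
    exact ((hg₁.hasDerivAt t).add ((hκ₁.hasDerivAt t).const_mul _)).add
      ((hh.hasDerivAt t).const_mul _)
  · have hradial := hasDerivAt_comp_smul_sphPt_radial hdiff
    rw [hcrit, zero_apply] at hradial
    have hα := (P.contDiff_α.differentiable (by simp) r).hasDerivAt
    have hb := (P.contDiff_b.differentiable (by simp) r).hasDerivAt
    refine HasDerivAt.unique ?_ hradial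
    have hpolar : HasDerivAt (fun s ↦ g₁ t + P.α s * κ₁ t + P.b s * h t)
        (deriv P.α r * κ₁ t + deriv P.b r * h t) r :=
      ((hα.mul_const _).const_add _).add (hb.mul_const _)
    refine hpolar.congr_of_eventuallyEq ?_
    filter_upwards [Ioi_mem_nhds hr] with s hs
    exact E.glue_smul_sphPt P hκ₁ hh hs t

/-- The critical points of the glued extension in the outer part `r ≥ r₂` of the collar. -/
def outerCritPts (h : ℝ → ℝ) : Set E2 :=
  {x | ‖x‖ ∈ Ico P.r₂ 1 ∧ h (polarAngle x) = 0 ∧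
    deriv g₁ (polarAngle x) + P.b ‖x‖ * deriv h (polarAngle x) = 0}

lemma critPts_glue_subset (hg₁ : SmoothPeriodic g₁) (hκ₁ : SmoothPeriodic κ₁)
    (hh : SmoothPeriodic h) (hη : ∀ a c t, |a| ≤ η → |c| ≤ η → κ₁ t * h t ≤ 0 →
      deriv g₁ t + a * deriv κ₁ t + c * deriv h t ≠ 0) :
    critPts (E.glue P h) ⊆ critPts E.toFun ∪ E.outerCritPts P h := by
  rintro x ⟨hx, hcrit⟩
  rcases lt_or_ge ‖x‖ P.r₁ with hlt | hge
  · left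
    refine ⟨hx, hcrit ▸ Filter.EventuallyEq.fderiv_eq ?_⟩
    filter_upwards [continuous_norm.continuousAt.eventually_lt_const hlt] with y hy
    exact (E.glue_eq_of_norm_le P hy.le).symm
  right
  have hr : E.r₀ < ‖x‖ := P.r₀_lt_r₁.trans_le hge
  rw [← norm_smul_sphPt_polarAngle x] at hcrit
  obtain ⟨hangular, hradial⟩ := E.deriv_eq_zero_of_fderiv_glue_eq_zero P hg₁ hκ₁ hh hr hcrit
  rcases lt_or_ge ‖x‖ P.r₂ with hlt₂ | hge₂
  · have hmem : ‖x‖ ∈ Ico P.r₁ P.r₂ := ⟨hge, hlt₂⟩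
    have hα := P.deriv_α_pos _ hmem
    have hb := P.deriv_b_nonneg _ hmem
    refine (hη _ _ _ (P.abs_α_le _ hmem) (P.abs_b_le _ hmem) ?_ hangular).elim
    have hκh : deriv P.α ‖x‖ * (κ₁ (polarAngle x) * h (polarAngle x)) =
        -(deriv P.b ‖x‖ * h (polarAngle x) ^ 2) := by linear_combination h (polarAngle x) * hradial
    exact nonpos_of_mul_nonpos_right (hκh.trans_le (neg_nonpos_of_nonneg (by positivity))) hα
  · rw [P.α_eq_of_ge _ hge₂, zero_mul, add_zero] at hangular
    rw [P.deriv_α_eq_of_ge _ hge₂, zero_mul, zero_add] at hradial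
    have hr₁ : ‖x‖ < 1 := mem_ball_zero_iff.1 hx
    have hb := (P.deriv_b_pos _ ⟨hge₂, hr₁.le⟩).ne'
    exact ⟨⟨hge₂, hr₁⟩, (mul_eq_zero.1 hradial).resolve_left hb, hangular⟩

lemma encard_outerCritPts_le (hg : SmoothPeriodic g) (hg₁ : SmoothPeriodic g₁)
    (hne : ∀ t, deriv g t = 0 → g t ≠ g₁ t) :
    (E.outerCritPts P fun t ↦ g t - g₁ t).encard ≤ (oppositeCrossings g g₁).encard := by
  have hh := hg.sub hg₁
  have hopp : ∀ x ∈ E.outerCritPts P fun t ↦ g t - g₁ t,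
      deriv g (polarAngle x) * deriv g₁ (polarAngle x) < 0 := by
    rintro x ⟨hr, hcross, hslope⟩
    rw [hg.deriv_sub hg₁] at hslope
    have hg' := hne (polarAngle x) |>.mt (not_not.2 (sub_eq_zero.1 hcross))
    have hb := P.b_pos _ (Ico_subset_Icc_self hr)
    have hb₁ := sub_pos.2 (P.b_lt_one hr)
    have hprod : (1 - P.b ‖x‖) * (deriv g (polarAngle x) * deriv g₁ (polarAngle x)) =
        -(P.b ‖x‖ * deriv g (polarAngle x) ^ 2) := by
      linear_combination deriv g (polarAngle x) * hslope
    exact neg_of_mul_neg_right (hprod.trans_lt (neg_neg_of_pos (by positivity))) hb₁.le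
  refine encard_le_encard_of_injOn (f := fun x ↦ (polarAngle x : Real.Angle))
    (fun x hx ↦ ⟨_, ⟨sub_eq_zero.1 hx.2.1, hopp x hx⟩, rfl⟩) fun x hx y hy hxy ↦ ?_
  have hslope_y := hy.2.2
  rw [← hg₁.deriv.apply_eq_of_angle_eq hxy, ← hh.deriv.apply_eq_of_angle_eq hxy] at hslope_y
  have hslope_ne : deriv (fun t ↦ g t - g₁ t) (polarAngle x) ≠ 0 := fun h₀ ↦ by
    have hslope_x := hx.2.2
    have hlt := hopp x hx
    rw [h₀, mul_zero, add_zero] at hslope_x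
    rw [hslope_x, mul_zero] at hlt
    exact hlt.false
  have hb : P.b ‖x‖ = P.b ‖y‖ :=
    mul_right_cancel₀ hslope_ne (by linear_combination hx.2.2 - hslope_y)
  have hnorm : ‖x‖ = ‖y‖ := P.strictMonoOn_b.injOn (Ico_subset_Icc_self hx.1)
    (Ico_subset_Icc_self hy.1) hb
  rw [← norm_smul_sphPt_polarAngle x, ← norm_smul_sphPt_polarAngle y, hnorm,
    sphPt_eq_of_angle_eq hxy]

theorem exists_glue (hg : SmoothPeriodic g) (hg₁ : SmoothPeriodic g₁) (hκ₁ : SmoothPeriodic κ₁)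
    (hcrit₁ : ∀ t, deriv g₁ t = 0 → 0 < κ₁ t * (g t - g₁ t))
    (hcrit : ∀ t, deriv g t = 0 → g t ≠ g₁ t) :
    ∃ E' : CollarExtension g fun t ↦ g t - g₁ t,
      (critPts E'.toFun).encard ≤ (critPts E.toFun).encard + (oppositeCrossings g g₁).encard := by
  have hh := hg.sub hg₁
  obtain ⟨η, hη, hη_ne⟩ := exists_pos_deriv_add_ne_zero hg₁ hκ₁ hh hcrit₁
  obtain ⟨P⟩ := CollarProfile.nonempty E.contDiff_β E.β_one E.deriv_β_pos E.r₀_lt_one hη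
  refine ⟨{
    toFun := E.glue P fun t ↦ g t - g₁ t
    β := fun r ↦ P.b r - 1
    r₀ := P.r₂
    r₀_pos := E.r₀_pos.trans (P.r₀_lt_r₁.trans P.r₁_lt_r₂)
    r₀_lt_one := P.r₂_lt_one
    contDiff := E.contDiff_glue P hκ₁ hh
    contDiff_β := P.contDiff_b.sub contDiff_const
    β_one := sub_eq_zero.2 P.b_one
    deriv_β_pos := fun r hr ↦ by
      rw [deriv_sub_const]
      exact P.deriv_b_pos r (Ioc_subset_Icc_self hr)
    polar_eq := fun r hr t ↦ by
      rw [E.glue_smul_sphPt P hκ₁ hh ((P.r₀_lt_r₁.trans P.r₁_lt_r₂).trans hr),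
        P.α_eq_of_ge r hr.le]
      ring }, ?_⟩
  exact (encard_le_encard (E.critPts_glue_subset P hg₁ hκ₁ hh hη_ne)).trans
    ((encard_union_le _ _).trans (by gcongr; exact E.encard_outerCritPts_le P hg hg₁ hcrit))

end CollarExtension

end Collar

section Zigzag

/-- `g` is a smooth function on the circle which alternately increases and decreases on the `2 * k`
arcs between the consecutive angles `x 0 < x 1 < ⋯ < x (2 * k) = x 0 + 2π`, starting from a
minimum `x 0` that lies below all the maxima. -/
structure Zigzag (k : ℕ) (g : ℝ → ℝ) (x : ℕ → ℝ) : Prop where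
  smooth : SmoothPeriodic g
  strictMono : StrictMono x
  closes : x (2 * k) = x 0 + 2 * π
  deriv_sign : ∀ i < 2 * k, ∀ t ∈ Ioo (x i) (x (i + 1)), 0 < (-1) ^ i * deriv g t
  low : ∀ i < 2 * k, Odd i → g (x 0) < g (x i)

/-- `κ` is negative at the nodes `x i` with `i` even and positive at those with `i` odd. -/
def AlternatesAt (x : ℕ → ℝ) (k : ℕ) (κ : ℝ → ℝ) : Prop := ∀ i < 2 * k, (-1) ^ i * κ (x i) < 0

/-- The sequence of nodes without `x 1` and `x 2`. -/
def dropPair (x : ℕ → ℝ) : ℕ → ℝ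
  | 0 => x 0
  | i + 1 => x (i + 3)

variable {k : ℕ} {g g₁ κ h : ℝ → ℝ} {x : ℕ → ℝ} {t : ℝ}

lemma exists_mem_Ico_succ_of_mem_Ico {α : Type*} [LinearOrder α] {x : ℕ → α} {s : α} {N : ℕ}
    (hs : s ∈ Ico (x 0) (x N)) : ∃ i < N, s ∈ Ico (x i) (x (i + 1)) := by
  induction N with
  | zero => exact absurd hs (by simp)
  | succ N ih =>
    rcases lt_or_ge s (x N) with h | h
    · obtain ⟨i, hi, hmem⟩ := ih ⟨hs.1, h⟩
      exact ⟨i, hi.trans N.lt_succ_self, hmem⟩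
    · exact ⟨N, N.lt_succ_self, h, hs.2⟩

lemma neg_one_pow_mul_mul_neg_one_pow_mul {R : Type*} [CommRing R] (i : ℕ) (a b : R) :
    (-1) ^ i * a * ((-1) ^ i * b) = a * b := by
  rw [mul_mul_mul_comm, ← mul_pow, neg_one_mul, neg_neg, one_pow, one_mul]

lemma strictMono_dropPair (hx : StrictMono x) : StrictMono (dropPair x) :=
  strictMono_nat_of_lt_succ fun
    | 0 => hx (by simp)
    | _ + 1 => hx (by simp)

lemma AlternatesAt.dropPair (hκ : AlternatesAt x (k + 2) κ) :
    AlternatesAt (dropPair x) (k + 1) κ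
  | 0, _ => hκ 0 (by simp)
  | i + 1, hi => by simpa [_root_.dropPair, pow_succ] using hκ (i + 3) (by lia)

namespace Zigzag

lemma exists_arc (hg : Zigzag k g x) (t : ℝ) :
    ∃ i < 2 * k, ∃ s ∈ Ico (x i) (x (i + 1)), (t : Real.Angle) = s := by
  obtain ⟨i, hi, hmem⟩ := exists_mem_Ico_succ_of_mem_Ico (x := x) (N := 2 * k)
    (hg.closes ▸ toIcoMod_mem_Ico two_pi_pos (x 0) t)
  exact ⟨i, hi, _, hmem, (Real.Angle.coe_toIcoMod t (x 0)).symm⟩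

lemma exists_node_of_deriv_eq_zero (hg : Zigzag k g x) (ht : deriv g t = 0) :
    ∃ i < 2 * k, (t : Real.Angle) = x i := by
  obtain ⟨i, hi, s, hs, hts⟩ := hg.exists_arc t
  rcases hs.1.eq_or_lt with rfl | hlt
  · exact ⟨i, hi, hts⟩
  · have hsign := hg.deriv_sign i hi s ⟨hlt, hs.2⟩
    rw [← hg.smooth.deriv.apply_eq_of_angle_eq hts, ht, mul_zero] at hsign
    exact hsign.false.elim

lemma mul_pos_of_alternatesAt (hg : Zigzag k g x) (hκ : SmoothPeriodic κ) (hh : SmoothPeriodic h)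
    (hκx : AlternatesAt x k κ) (hhx : AlternatesAt x k h) (ht : deriv g t = 0) :
    0 < κ t * h t := by
  obtain ⟨i, hi, hti⟩ := hg.exists_node_of_deriv_eq_zero ht
  rw [hκ.apply_eq_of_angle_eq hti, hh.apply_eq_of_angle_eq hti]
  have hpos := mul_pos_of_neg_of_neg (hκx i hi) (hhx i hi)
  rwa [neg_one_pow_mul_mul_neg_one_pow_mul] at hpos

lemma strictMonoOn_neg_one_pow_mul (hg : Zigzag k g x) {i : ℕ} (hi : i < 2 * k) :
    StrictMonoOn (fun t ↦ (-1) ^ i * g t) (Icc (x i) (x (i + 1))) := by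
  refine strictMonoOn_of_deriv_pos (convex_Icc _ _)
    (continuous_const.mul hg.smooth.continuous).continuousOn fun t ht ↦ ?_
  rw [interior_Icc] at ht
  rw [((hg.smooth.hasDerivAt t).const_mul _).deriv]
  exact hg.deriv_sign i hi t ht

lemma sub_sign (hg : Zigzag k g x) {i : ℕ} (hi : i < 2 * k) :
    0 < (-1) ^ i * (g (x (i + 1)) - g (x i)) := by
  have hlt := hg.strictMono i.lt_succ_self
  rw [mul_sub]
  exact sub_pos.2 (hg.strictMonoOn_neg_one_pow_mul hi (left_mem_Icc.2 hlt.le)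
    (right_mem_Icc.2 hlt.le) hlt)

lemma deriv_mul_deriv_pos (hg : Zigzag (k + 2) g x) (hg₁ : Zigzag (k + 1) g₁ (dropPair x))
    {i : ℕ} (hi : i < 2 * (k + 2)) (hi₁ : i ≠ 1) (ht : t ∈ Ioo (x i) (x (i + 1))) :
    0 < deriv g t * deriv g₁ t := by
  obtain ⟨j, hj, ht', hsign⟩ : ∃ j < 2 * (k + 1),
      t ∈ Ioo (dropPair x j) (dropPair x (j + 1)) ∧ (-1 : ℝ) ^ i = (-1) ^ j := by
    match i with
    | 0 => exact ⟨0, by simp, ⟨ht.1, ht.2.trans (hg.strictMono (by simp))⟩, rfl⟩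
    | 2 => exact ⟨0, by simp, ⟨ht.1.trans' (hg.strictMono (by simp)), ht.2⟩, by simp⟩
    | i + 3 => exact ⟨i + 1, by lia, ht, by simp [pow_succ]⟩
  have hpos := mul_pos (hg.deriv_sign i hi t ht) (hg₁.deriv_sign j hj t ht')
  rwa [hsign, neg_one_pow_mul_mul_neg_one_pow_mul] at hpos

lemma strictAntiOn_sub (hg : Zigzag (k + 2) g x) (hg₁ : Zigzag (k + 1) g₁ (dropPair x)) :
    StrictAntiOn (fun t ↦ g t - g₁ t) (Icc (x 1) (x 2)) := by
  refine strictAntiOn_of_deriv_neg (convex_Icc _ _)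
    (hg.smooth.sub hg₁.smooth).continuous.continuousOn fun t ht ↦ ?_
  rw [interior_Icc] at ht
  rw [hg.smooth.deriv_sub hg₁.smooth]
  have hneg := hg.deriv_sign 1 (by lia) t ht
  have hpos := hg₁.deriv_sign 0 (by lia) t
    ⟨ht.1.trans' (hg.strictMono (by simp)), ht.2.trans (hg.strictMono (by simp))⟩
  linarith

lemma exists_mem_Icc_of_mem_oppositeCrossings (hg : Zigzag (k + 2) g x)
    (hg₁ : Zigzag (k + 1) g₁ (dropPair x)) (halt : AlternatesAt x (k + 2) fun t ↦ g t - g₁ t)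
    {θ : Real.Angle} (hθ : θ ∈ oppositeCrossings g g₁) :
    ∃ s ∈ Icc (x 1) (x 2), θ = s ∧ g s - g₁ s = 0 := by
  obtain ⟨t, ⟨hcross, hslope⟩, rfl⟩ := hθ
  obtain ⟨i, hi, s, hs, hts⟩ := hg.exists_arc t
  have hs₀ : g s - g₁ s = 0 := by
    rw [← (hg.smooth.sub hg₁.smooth).apply_eq_of_angle_eq hts, hcross, sub_self]
  rw [hg.smooth.deriv.apply_eq_of_angle_eq hts, hg₁.smooth.deriv.apply_eq_of_angle_eq hts]
    at hslope
  have hs_ne : x i ≠ s := by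
    rintro rfl
    have hnode : (-1) ^ i * (g (x i) - g₁ (x i)) < 0 := halt i hi
    rw [hs₀, mul_zero] at hnode
    exact hnode.false
  obtain rfl : i = 1 := by
    by_contra hi₁
    exact (hg.deriv_mul_deriv_pos hg₁ hi hi₁ ⟨hs.1.lt_of_ne hs_ne, hs.2⟩).not_gt hslope
  exact ⟨s, Ico_subset_Icc_self hs, hts, hs₀⟩

lemma encard_oppositeCrossings_le_one (hg : Zigzag (k + 2) g x)
    (hg₁ : Zigzag (k + 1) g₁ (dropPair x))
    (halt : AlternatesAt x (k + 2) fun t ↦ g t - g₁ t) :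
    (oppositeCrossings g g₁).encard ≤ 1 := by
  refine encard_le_one_iff.2 fun θ θ' hθ hθ' ↦ ?_
  obtain ⟨s, hs, rfl, hs₀⟩ := hg.exists_mem_Icc_of_mem_oppositeCrossings hg₁ halt hθ
  obtain ⟨s', hs', rfl, hs₀'⟩ := hg.exists_mem_Icc_of_mem_oppositeCrossings hg₁ halt hθ'
  rw [(hg.strictAntiOn_sub hg₁).injOn hs hs' (hs₀.trans hs₀'.symm)]

end Zigzag

end Zigzag

section Cancellation

/-- A smooth transition from `0` at `a` to `1` at `d`, strictly increasing on `[a, d]`, most of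
which takes place on the subinterval `[b, c]` when `ε` is small. -/
def mixedStep (a b c d ε t : ℝ) : ℝ := (1 - ε) * smoothStep b c t + ε * smoothStep a d t

section MixedStep

variable {a b c d ε t : ℝ}

lemma contDiff_mixedStep (a b c d ε : ℝ) : ContDiff ℝ ∞ (mixedStep a b c d ε) :=
  (contDiff_const.mul (contDiff_smoothStep b c)).add (contDiff_const.mul (contDiff_smoothStep a d))

lemma mixedStep_eq_zero (hab : a < b) (hbc : b < c) (hcd : c < d) (ht : t ≤ a) :
    mixedStep a b c d ε t = 0 := by
  rw [mixedStep, smoothStep_eq_zero hbc (by linarith), smoothStep_eq_zero (by linarith) ht]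
  ring

lemma mixedStep_eq_one (hab : a < b) (hbc : b < c) (hcd : c < d) (ht : d ≤ t) :
    mixedStep a b c d ε t = 1 := by
  rw [mixedStep, smoothStep_eq_one hbc (by linarith), smoothStep_eq_one (by linarith) ht]
  ring

lemma mixedStep_le (hbc : b < c) (hε : 0 < ε) : mixedStep a b c d ε b ≤ ε := by
  rw [mixedStep, smoothStep_eq_zero hbc le_rfl, mul_zero, zero_add]
  exact mul_le_of_le_one_right hε.le (smoothStep_le_one _ _ _)

lemma le_mixedStep (hbc : b < c) (hε : 0 < ε) : 1 - ε ≤ mixedStep a b c d ε c := by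
  rw [mixedStep, smoothStep_eq_one hbc le_rfl, mul_one]
  exact le_add_of_nonneg_right (mul_nonneg hε.le (smoothStep_nonneg _ _ _))

lemma deriv_mixedStep_pos (hbc : b < c) (hε : ε ∈ Ioo 0 1) (ht : t ∈ Ioo a d) :
    0 < deriv (mixedStep a b c d ε) t := by
  have hderiv : ∀ u v, HasDerivAt (smoothStep u v) (deriv (smoothStep u v) t) t := fun u v ↦
    ((contDiff_smoothStep u v).differentiable (by simp) t).hasDerivAt
  have hmixed := (((hderiv b c).const_mul (1 - ε)).add ((hderiv a d).const_mul ε)).deriv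
  change deriv (mixedStep a b c d ε) t = _ at hmixed
  rw [hmixed]
  exact add_pos_of_nonneg_of_pos
    (mul_nonneg (sub_nonneg.2 hε.2.le) (deriv_smoothStep_nonneg hbc t))
    (mul_pos hε.1 (deriv_smoothStep_pos ht))

end MixedStep

/-- The profile, on one period, of a function for which the nodes `x 1` and `x 2` have been
cancelled: it climbs from `w 0` to `w 3` on `[x 0, x 3]`, mostly between `x 1` and `x 2`, and then
interpolates the values `w i` at the nodes `x i` with `3 ≤ i ≤ N + 3`. -/
def cancelledProfile (x w : ℕ → ℝ) (N : ℕ) (ε t : ℝ) : ℝ :=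
  (w 3 - w 0) * (mixedStep (x 0) (x 1) (x 2) (x 3) ε t - 1) +
    interpolant (fun i ↦ x (i + 3)) (fun i ↦ w (i + 3)) N t

section CancelledProfile

variable {x : ℕ → ℝ} (w : ℕ → ℝ) {N i : ℕ} {ε t : ℝ}

lemma contDiff_cancelledProfile (x w : ℕ → ℝ) (N : ℕ) (ε : ℝ) :
    ContDiff ℝ ∞ (cancelledProfile x w N ε) :=
  (contDiff_const.mul ((contDiff_mixedStep _ _ _ _ _).sub contDiff_const)).add
    (contDiff_interpolant _ _ _)

lemma strictMono_shift (hx : StrictMono x) (m : ℕ) : StrictMono fun i ↦ x (i + m) :=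
  fun _ _ hij ↦ hx (Nat.add_lt_add_right hij m)

lemma cancelledProfile_eq_mixedStep (hx : StrictMono x) (ht : t ≤ x 3) :
    cancelledProfile x w N ε t =
      w 0 + (w 3 - w 0) * mixedStep (x 0) (x 1) (x 2) (x 3) ε t := by
  rw [cancelledProfile, interpolant_of_le _ (strictMono_shift hx 3) ht]
  ring

lemma cancelledProfile_eq_interpolant (hx : StrictMono x) (ht : x 3 ≤ t) :
    cancelledProfile x w N ε t = interpolant (fun i ↦ x (i + 3)) (fun i ↦ w (i + 3)) N t := by
  rw [cancelledProfile,
    mixedStep_eq_one (hx (by simp)) (hx (by simp)) (hx (by simp)) ht, sub_self, mul_zero, zero_add]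

lemma cancelledProfile_of_le (hx : StrictMono x) (ht : t ≤ x 0) :
    cancelledProfile x w N ε t = w 0 := by
  rw [cancelledProfile_eq_mixedStep w hx (ht.trans (hx.monotone (by simp))),
    mixedStep_eq_zero (hx (by simp)) (hx (by simp)) (hx (by simp)) ht, mul_zero, add_zero]

lemma cancelledProfile_of_ge (hx : StrictMono x) (ht : x (N + 3) ≤ t) :
    cancelledProfile x w N ε t = w (N + 3) := by
  rw [cancelledProfile_eq_interpolant w hx ((hx.monotone (by simp)).trans ht),
    interpolant_of_ge _ (strictMono_shift hx 3) ht]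

lemma cancelledProfile_apply_node (hx : StrictMono x) (hi : i ≤ N) :
    cancelledProfile x w N ε (x (i + 3)) = w (i + 3) := by
  rw [cancelledProfile_eq_interpolant w hx (hx.monotone (by simp))]
  exact interpolant_apply_node _ (strictMono_shift hx 3) hi

lemma deriv_cancelledProfile_pos (hx : StrictMono x) (hε : ε ∈ Ioo 0 1) (hw : w 0 < w 3)
    (ht : t ∈ Ioo (x 0) (x 3)) : 0 < deriv (cancelledProfile x w N ε) t := by
  have heq : cancelledProfile x w N ε =ᶠ[𝓝 t] fun s ↦
      w 0 + (w 3 - w 0) * mixedStep (x 0) (x 1) (x 2) (x 3) ε s := by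
    filter_upwards [Iio_mem_nhds ht.2] with s hs
    exact cancelledProfile_eq_mixedStep w hx hs.le
  rw [heq.deriv_eq, (((((contDiff_mixedStep _ _ _ _ _).differentiable (by simp)
    t).hasDerivAt).const_mul _).const_add _).deriv]
  exact mul_pos (sub_pos.2 hw) (deriv_mixedStep_pos (hx (by simp)) hε ht)

lemma exists_pos_deriv_cancelledProfile_eq (hx : StrictMono x) (hi : i < N)
    (ht : t ∈ Ioo (x (i + 3)) (x (i + 4))) :
    ∃ p > 0, deriv (cancelledProfile x w N ε) t = (w (i + 4) - w (i + 3)) * p := by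
  have heq : cancelledProfile x w N ε =ᶠ[𝓝 t]
      interpolant (fun i ↦ x (i + 3)) (fun i ↦ w (i + 3)) N := by
    filter_upwards [Ioi_mem_nhds ((hx.monotone (by simp : 3 ≤ i + 3)).trans_lt ht.1)] with s hs
    exact cancelledProfile_eq_interpolant w hx hs.le
  refine ⟨_, deriv_smoothStep_pos ht, ?_⟩
  rw [heq.deriv_eq]
  exact deriv_interpolant _ (strictMono_shift hx 3) hi (Ioo_subset_Icc_self ht)

end CancelledProfile

namespace Zigzag

variable {k : ℕ} {g : ℝ → ℝ} {x : ℕ → ℝ}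

lemma apply_closes (hg : Zigzag k g x) : g (x (2 * k)) = g (x 0) := by
  rw [hg.closes, hg.smooth.periodic]

lemma exists_margin (hg : Zigzag k g x) :
    ∃ δ > 0, ∀ i < 2 * k, 2 * δ < (-1) ^ i * (g (x (i + 1)) - g (x i)) ∧
      (Odd i → 2 * δ < g (x i) - g (x 0)) := by
  have hsmall : ∀ {c : ℝ}, 0 < c → ∀ᶠ δ : ℝ in 𝓝[>] 0, 2 * δ < c := fun {c} hc ↦ by
    filter_upwards [Ioo_mem_nhdsGT (half_pos hc)] with δ hδ
    linarith [hδ.2]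
  have hall : ∀ᶠ δ : ℝ in 𝓝[>] 0, ∀ i ∈ Iio (2 * k),
      2 * δ < (-1) ^ i * (g (x (i + 1)) - g (x i)) ∧ (Odd i → 2 * δ < g (x i) - g (x 0)) := by
    refine (finite_Iio _).eventually_all.2 fun i hi ↦ (hsmall (hg.sub_sign hi)).and ?_
    by_cases hodd : Odd i
    · exact (hsmall (sub_pos.2 (hg.low i hi hodd))).mono fun _ h _ ↦ h
    · exact .of_forall fun _ h ↦ absurd h hodd
  obtain ⟨δ, hδ, hpos⟩ := (hall.and self_mem_nhdsWithin).exists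
  exact ⟨δ, hpos, hδ⟩

end Zigzag

/-- The values `w` alternately increase and decrease along `0, 1, …, 2 * k`, starting and ending at
a minimum that lies below all the maxima. -/
structure AlternatingValues (k : ℕ) (w : ℕ → ℝ) : Prop where
  closes : w (2 * k) = w 0
  sub_sign : ∀ i < 2 * k, 0 < (-1) ^ i * (w (i + 1) - w i)
  low : ∀ i < 2 * k, Odd i → w 0 < w i

lemma AlternatingValues.exists_zigzag {k : ℕ} {w x : ℕ → ℝ} {ε : ℝ}
    (hw : AlternatingValues (k + 2) w) (hx : StrictMono x)
    (hclose : x (2 * (k + 2)) = x 0 + 2 * π) (hε : ε ∈ Ioo 0 1) :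
    ∃ g₁, Zigzag (k + 1) g₁ (dropPair x) ∧
      ∀ i ≤ 2 * (k + 2), g₁ (x i) = cancelledProfile x w (2 * k + 1) ε (x i) := by
  obtain ⟨g₁, hg₁, heq⟩ := exists_smoothPeriodic_eqOn (x₀ := x 0) (c := w 0)
    (contDiff_cancelledProfile x w (2 * k + 1) ε) (fun t ht ↦ cancelledProfile_of_le w hx ht)
    (fun t ht ↦ (cancelledProfile_of_ge w hx (hclose.trans_le ht)).trans hw.closes)
  rw [← hclose] at heq
  have hnode : ∀ i ≤ 2 * (k + 2), g₁ (x i) = cancelledProfile x w (2 * k + 1) ε (x i) :=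
    fun i hi ↦ heq ⟨hx.monotone i.zero_le, hx.monotone hi⟩
  have hderiv : ∀ i j, j ≤ 2 * (k + 2) → ∀ t ∈ Ioo (x i) (x j),
      deriv g₁ t = deriv (cancelledProfile x w (2 * k + 1) ε) t := fun i j hj t ht ↦
    (heq.eventuallyEq_of_mem (Icc_mem_nhds ((hx.monotone i.zero_le).trans_lt ht.1)
      (ht.2.trans_le (hx.monotone hj)))).deriv_eq
  refine ⟨g₁, ⟨hg₁, strictMono_dropPair hx, hclose, ?_, ?_⟩, hnode⟩
  · rintro (_ | i) hi t ht
    · rw [pow_zero, one_mul, hderiv 0 3 (by lia) t ht]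
      exact deriv_cancelledProfile_pos w hx hε (hw.low 3 (by lia) (by decide)) ht
    · obtain ⟨p, hp, hpderiv⟩ :=
        exists_pos_deriv_cancelledProfile_eq w (N := 2 * k + 1) (ε := ε) hx (by lia) ht
      rw [hderiv _ _ (by lia) t ht, hpderiv, ← mul_assoc]
      refine mul_pos ?_ hp
      simpa [pow_succ] using hw.sub_sign (i + 3) (by lia)
  · rintro (_ | i) hi hodd
    · exact absurd hodd (by decide)
    · change g₁ (x 0) < g₁ (x (i + 3))
      rw [hnode 0 (by lia), hnode (i + 3) (by lia), cancelledProfile_of_le w hx le_rfl,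
        cancelledProfile_apply_node w hx (by lia)]
      exact hw.low (i + 3) (by lia) (by grind)

namespace Zigzag

variable {k : ℕ} {g : ℝ → ℝ} {x : ℕ → ℝ}

lemma exists_alternatingValues (hg : Zigzag k g x) :
    ∃ δ > 0, AlternatingValues k fun i ↦ g (x i) + (-1) ^ i * δ := by
  obtain ⟨δ, hδ, hmargin⟩ := hg.exists_margin
  refine ⟨δ, hδ, ⟨?_, fun i hi ↦ ?_, fun i hi hodd ↦ ?_⟩⟩
  · simp [hg.apply_closes]
  · have hsq : (-1 : ℝ) ^ i * (-1) ^ i = 1 := by simp [← mul_pow]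
    linear_combination (hmargin i hi).1 + 2 * δ * hsq
  · simp only [hodd.neg_one_pow, pow_zero]
    linarith [(hmargin i hi).2 hodd]

lemma exists_cancel (hg : Zigzag (k + 2) g x) :
    ∃ g₁, Zigzag (k + 1) g₁ (dropPair x) ∧ AlternatesAt x (k + 2) fun t ↦ g t - g₁ t := by
  obtain ⟨δ, hδ, hw⟩ := hg.exists_alternatingValues
  set w := fun i ↦ g (x i) + (-1) ^ i * δ with hw_def
  have hjump : 0 < w 3 - w 0 := sub_pos.2 (hw.low 3 (by lia) (by decide))
  obtain ⟨ε, hε, hεδ⟩ : ∃ ε ∈ Ioo (0 : ℝ) 1, (w 3 - w 0) * ε < δ := by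
    have hsum : 0 < w 3 - w 0 + δ := by positivity
    refine ⟨δ / (w 3 - w 0 + δ), ⟨by positivity, (div_lt_one hsum).2 (by linarith)⟩, ?_⟩
    rw [mul_div_assoc', div_lt_iff₀ hsum]
    nlinarith
  obtain ⟨g₁, hg₁, hnode⟩ := hw.exists_zigzag hg.strictMono hg.closes hε
  have hx := hg.strictMono
  refine ⟨g₁, hg₁, fun i hi ↦ ?_⟩
  change (-1) ^ i * (g (x i) - g₁ (x i)) < 0
  rw [hnode i hi.le]
  match i with
  | 0 =>
    rw [cancelledProfile_of_le w hx le_rfl]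
    simpa [hw_def] using hδ
  | 1 =>
    rw [cancelledProfile_eq_mixedStep w hx (hx.monotone (by simp))]
    have hstep := mul_le_mul_of_nonneg_left
      (mixedStep_le (a := x 0) (d := x 3) (hx one_lt_two) hε.1) hjump.le
    have hrise : 0 < (-1) ^ 0 * (w 1 - w 0) := hw.sub_sign 0 (by lia)
    linarith [show w 1 = g (x 1) - δ by simp [hw_def, sub_eq_add_neg]]
  | 2 =>
    rw [cancelledProfile_eq_mixedStep w hx (hx.monotone (by simp))]
    have hstep := mul_le_mul_of_nonneg_left
      (le_mixedStep (a := x 0) (d := x 3) (hx one_lt_two) hε.1) hjump.le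
    have hrise : 0 < (-1) ^ 2 * (w 3 - w 2) := hw.sub_sign 2 (by lia)
    linarith [show w 2 = g (x 2) + δ by simp [hw_def]]
  | i + 3 =>
    rw [cancelledProfile_apply_node w hx (by lia)]
    have hsq : (-1 : ℝ) ^ (i + 3) * (-1) ^ (i + 3) = 1 := by simp [← mul_pow]
    simp only [hw_def]
    linear_combination hδ - δ * hsq

end Zigzag

end Cancellation

section Base

/-- The restriction to the unit circle of the affine function with value `c` at the origin and
gradient of length `ε` in the direction `b`. -/
def wave (b c ε t : ℝ) : ℝ := c + ε * cos (t - b)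

variable {b c ε δ t : ℝ} {g : ℝ → ℝ}

lemma smoothPeriodic_const_mul_cos_sub (b ε : ℝ) : SmoothPeriodic fun t ↦ ε * cos (t - b) where
  contDiff := contDiff_const.mul (contDiff_cos.comp (contDiff_id.sub contDiff_const))
  periodic t := by simp only [add_sub_right_comm, cos_add_two_pi]

lemma smoothPeriodic_wave (b c ε : ℝ) : SmoothPeriodic (wave b c ε) where
  contDiff := contDiff_const.add (smoothPeriodic_const_mul_cos_sub b ε).contDiff
  periodic t := congrArg (c + ·) ((smoothPeriodic_const_mul_cos_sub b ε).periodic t)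

lemma deriv_wave (b c ε t : ℝ) : deriv (wave b c ε) t = ε * -sin (t - b) := by
  have h := ((((hasDerivAt_id t).sub_const b).cos).const_mul ε).const_add c
  exact h.deriv.trans (by rw [mul_one, id_eq])

lemma abs_wave_sub_le (hε : 0 ≤ ε) : |wave b c ε t - c| ≤ ε := by
  rw [wave, add_sub_cancel_left, abs_mul, abs_of_nonneg hε]
  exact mul_le_of_le_one_right hε (abs_cos_le_one _)

/-- The affine function that restricts to `wave b c ε`, as a collar extension. -/
def CollarExtension.affine (b c ε : ℝ) :
    CollarExtension (wave b c ε) fun t ↦ ε * cos (t - b) where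
  toFun y := c + ε * ⟪sphPt b, y⟫
  β r := r - 1
  r₀ := 1 / 2
  r₀_pos := by norm_num
  r₀_lt_one := by norm_num
  contDiff := contDiff_const.add (contDiff_const.mul (innerSL ℝ (sphPt b)).contDiff)
  contDiff_β := contDiff_id.sub contDiff_const
  β_one := sub_self 1
  deriv_β_pos r _ := by simp
  polar_eq r _ t := by
    rw [inner_smul_right, PiLp.inner_apply, Fin.sum_univ_two, wave, cos_sub]
    simp [sphPt]
    ring

lemma CollarExtension.critPts_affine (b c : ℝ) (hε : ε ≠ 0) :
    critPts (CollarExtension.affine b c ε).toFun = ∅ := by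
  refine eq_empty_of_forall_notMem fun y hy ↦ hε ?_
  have hderiv : HasFDerivAt (CollarExtension.affine b c ε).toFun (ε • innerSL ℝ (sphPt b)) y :=
    ((innerSL ℝ (sphPt b)).hasFDerivAt.const_mul ε).const_add c
  have happly := congrArg (fun L : E2 →L[ℝ] ℝ ↦ L (sphPt b)) (hderiv.fderiv.symm.trans hy.2)
  simpa [norm_sphPt] using happly

lemma angle_eq_or_eq_add_pi_of_sin_eq_zero (h : sin (t - b) = 0) :
    (t : Real.Angle) = b ∨ (t : Real.Angle) = (b + π : ℝ) := by
  rw [← Real.Angle.sin_coe, Real.Angle.sin_eq_zero_iff, Real.Angle.coe_sub] at h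
  rw [Real.Angle.coe_add, ← sub_eq_zero, ← sub_eq_iff_eq_add']
  exact h

lemma SmoothPeriodic.cos_mul_sub_wave_pos (hg : SmoothPeriodic g) (hε : 0 < ε)
    (hb : c < g b) (hbπ : g (b + π) < c) (hfar : ε < |g t - c|) (ht : sin (t - b) = 0) :
    0 < ε * cos (t - b) * (g t - wave b c ε t) := by
  rcases angle_eq_or_eq_add_pi_of_sin_eq_zero ht with h | h
  · have hcos : cos (t - b) = 1 := by simp [← Real.Angle.cos_coe, h]
    rw [hg.apply_eq_of_angle_eq h, abs_of_pos (sub_pos.2 hb)] at hfar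
    rw [wave, hcos, hg.apply_eq_of_angle_eq h]
    exact mul_pos (by simpa using hε) (by linarith)
  · have hcos : cos (t - b) = -1 := by
      rw [← Real.Angle.cos_coe, Real.Angle.coe_sub, h, Real.Angle.coe_add, add_sub_cancel_left,
        Real.Angle.cos_coe, cos_pi]
    rw [hg.apply_eq_of_angle_eq h, abs_of_neg (sub_neg.2 hbπ)] at hfar
    rw [wave, hcos, hg.apply_eq_of_angle_eq h]
    exact mul_pos_of_neg_of_neg (by simpa using hε) (by linarith)

lemma CollarExtension.exists_critPts_eq_empty (hg : SmoothPeriodic g) (hb : c < g b)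
    (hbπ : g (b + π) < c) (hcross : ∀ t, g t = c → 0 < deriv g t * -sin (t - b)) (hδ : 0 < δ) :
    ∃ κ, SmoothPeriodic κ ∧ (∀ t, |κ t - (g t - c)| < δ) ∧
      ∃ E : CollarExtension g κ, critPts E.toFun = ∅ := by
  obtain ⟨ε₀, hε₀, hfar⟩ := exists_pos_forall_le_of_periodic (T := 2 * π)
    (p := fun t ↦ deriv g t * -sin (t - b)) (q := fun t ↦ |g t - c|) two_pi_pos
    (hg.deriv.continuous.mul (by fun_prop)) (hg.continuous.sub continuous_const).abs
    (fun t ↦ by simp only [hg.deriv.periodic t, add_sub_right_comm, sin_add_two_pi])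
    (fun t ↦ by simp only [hg.periodic t])
    (fun t ht ↦ abs_pos.2 (sub_ne_zero.2 fun htc ↦ (hcross t htc).not_ge ht))
  obtain ⟨ε, hε, hε_lt⟩ := exists_between (lt_min hε₀ hδ)
  have hfar' : ∀ t, deriv g t * -sin (t - b) ≤ 0 → ε < |g t - c| := fun t ht ↦
    (hε_lt.trans_le (min_le_left _ _)).trans_le (hfar t ht)
  have hne : ∀ t, deriv g t * -sin (t - b) ≤ 0 → g t ≠ wave b c ε t := fun t ht heq ↦
    (hfar' t ht).not_ge (heq ▸ abs_wave_sub_le hε.le)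
  obtain ⟨E, hE⟩ := (CollarExtension.affine b c ε).exists_glue hg (smoothPeriodic_wave b c ε)
    (smoothPeriodic_const_mul_cos_sub b ε) (fun t ht ↦ by
      rw [deriv_wave, mul_eq_zero, neg_eq_zero, or_iff_right hε.ne'] at ht
      exact hg.cos_mul_sub_wave_pos hε hb hbπ (hfar' t (by simp [ht])) ht)
    (fun t ht ↦ hne t (by simp [ht]))
  refine ⟨_, hg.sub (smoothPeriodic_wave b c ε), fun t ↦ ?_, E, ?_⟩
  · rw [sub_sub_sub_cancel_left, abs_sub_comm]
    exact (abs_wave_sub_le hε.le).trans_lt (hε_lt.trans_le (min_le_right _ _))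
  · have hopp : oppositeCrossings g (wave b c ε) = ∅ := by
      refine image_eq_empty.2 (eq_empty_of_forall_notMem fun t ht ↦ ?_)
      have hslope := ht.2
      rw [deriv_wave, mul_left_comm] at hslope
      exact hne t (neg_of_mul_neg_right hslope hε.le).le ht.1
    rw [CollarExtension.critPts_affine b c hε.ne', hopp, encard_empty, encard_empty, add_zero] at hE
    exact encard_eq_zero.1 (nonpos_iff_eq_zero.1 hE)

namespace Zigzag

variable {x : ℕ → ℝ}

lemma strictMonoOn_Icc (hg : Zigzag 1 g x) : StrictMonoOn g (Icc (x 0) (x 1)) := by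
  simpa using hg.strictMonoOn_neg_one_pow_mul (i := 0) (by simp)

lemma strictAntiOn_Icc (hg : Zigzag 1 g x) : StrictAntiOn g (Icc (x 1) (x 2)) := by
  simpa using (hg.strictMonoOn_neg_one_pow_mul (i := 1) (by simp)).neg

lemma apply_min_le (hg : Zigzag 1 g x) (t : ℝ) : g (x 0) ≤ g t := by
  obtain ⟨i, hi, s, hs, hts⟩ := hg.exists_arc t
  rw [hg.smooth.apply_eq_of_angle_eq hts]
  match i with
  | 0 =>
    exact hg.strictMonoOn_Icc.monotoneOn (left_mem_Icc.2 (hs.1.trans hs.2.le))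
      (Ico_subset_Icc_self hs) hs.1
  | 1 =>
    rw [← hg.apply_closes]
    exact hg.strictAntiOn_Icc.antitoneOn (Ico_subset_Icc_self hs)
      (right_mem_Icc.2 (hs.1.trans hs.2.le)) hs.2.le

lemma apply_lt_max (hg : Zigzag 1 g x) (ht : (t : Real.Angle) ≠ x 1) : g t < g (x 1) := by
  obtain ⟨i, hi, s, hs, hts⟩ := hg.exists_arc t
  rw [hg.smooth.apply_eq_of_angle_eq hts]
  match i with
  | 0 =>
    exact hg.strictMonoOn_Icc (Ico_subset_Icc_self hs) (right_mem_Icc.2 (hs.1.trans hs.2.le)) hs.2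
  | 1 =>
    exact hg.strictAntiOn_Icc (left_mem_Icc.2 (hs.1.trans hs.2.le)) (Ico_subset_Icc_self hs)
      (hs.1.lt_of_ne (by rintro rfl; exact ht hts))

lemma deriv_mul_neg_sin_pos (hg : Zigzag 1 g x) (h₀ : g (x 0) < c) (hπ : g (x 1 + π) < c)
    (h₁ : c < g (x 1)) (ht : g t = c) : 0 < deriv g t * -sin (t - x 1) := by
  obtain ⟨i, hi, s, hs, hts⟩ := hg.exists_arc t
  have hsin : sin (t - x 1) = sin (s - x 1) := by
    rw [← Real.Angle.sin_coe, Real.Angle.coe_sub, hts, ← Real.Angle.coe_sub, Real.Angle.sin_coe]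
  rw [hg.smooth.deriv.apply_eq_of_angle_eq hts, hsin]
  rw [hg.smooth.apply_eq_of_angle_eq hts] at ht
  match i with
  | 0 =>
    have hlow : x 1 - π < s := by
      by_contra! hle
      refine (ht.symm.trans_le (hg.strictMonoOn_Icc.monotoneOn (Ico_subset_Icc_self hs)
        ⟨hs.1.trans hle, by linarith [pi_pos]⟩ hle)).not_gt ?_
      rwa [← hg.smooth.periodic, show x 1 - π + 2 * π = x 1 + π by ring]
    have hs₀ : x 0 ≠ s := by rintro rfl; exact h₀.ne ht
    have hderiv := hg.deriv_sign 0 hi s ⟨hs.1.lt_of_ne hs₀, hs.2⟩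
    rw [pow_zero, one_mul] at hderiv
    exact mul_pos hderiv (neg_pos.2 (sin_neg_of_neg_of_neg_pi_lt (sub_neg.2 hs.2) (by linarith)))
  | 1 =>
    have hhigh : s < x 1 + π := by
      by_contra! hle
      exact (ht.symm.trans_le (hg.strictAntiOn_Icc.antitoneOn
        ⟨by linarith [pi_pos], hle.trans hs.2.le⟩ (Ico_subset_Icc_self hs) hle)).not_gt hπ
    have hs₁ : x 1 ≠ s := by rintro rfl; exact h₁.ne' ht
    have hlt := hs.1.lt_of_ne hs₁
    have hderiv := hg.deriv_sign 1 hi s ⟨hlt, hs.2⟩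
    rw [pow_one, neg_one_mul, neg_pos] at hderiv
    exact mul_pos_of_neg_of_neg hderiv
      (neg_neg_of_pos (sin_pos_of_pos_of_lt_pi (sub_pos.2 hlt) (by linarith)))

lemma exists_collarExtension_of_two_nodes (hg : Zigzag 1 g x) :
    ∃ κ, SmoothPeriodic κ ∧ AlternatesAt x 1 κ ∧
      ∃ E : CollarExtension g κ, critPts E.toFun = ∅ := by
  have hlt : g (x 1 + π) < g (x 1) := hg.apply_lt_max (by simp [Real.Angle.pi_ne_zero])
  obtain ⟨c, hπ, h₁⟩ := exists_between hlt
  have h₀ := (hg.apply_min_le (x 1 + π)).trans_lt hπ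
  obtain ⟨κ, hκ, hclose, hE⟩ := CollarExtension.exists_critPts_eq_empty hg.smooth h₁ hπ
    (fun t ↦ hg.deriv_mul_neg_sin_pos h₀ hπ h₁) (lt_min (sub_pos.2 h₁) (sub_pos.2 h₀))
  refine ⟨κ, hκ, fun i hi ↦ ?_, hE⟩
  have hi_close := abs_lt.1 ((hclose (x i)).trans_le (min_le_left _ _))
  have hi_close' := abs_lt.1 ((hclose (x i)).trans_le (min_le_right _ _))
  match i with
  | 0 => linarith
  | 1 => linarith

theorem exists_collarExtension {k : ℕ} (hg : Zigzag (k + 1) g x) :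
    ∃ κ, SmoothPeriodic κ ∧ AlternatesAt x (k + 1) κ ∧
      ∃ E : CollarExtension g κ, (critPts E.toFun).encard ≤ k := by
  induction k generalizing g x with
  | zero =>
    obtain ⟨κ, hκ, halt, E, hE⟩ := hg.exists_collarExtension_of_two_nodes
    exact ⟨κ, hκ, halt, E, by simp [hE]⟩
  | succ k ih =>
    obtain ⟨g₁, hg₁, halt⟩ := hg.exists_cancel
    obtain ⟨κ₁, hκ₁, halt₁, E, hE⟩ := ih hg₁
    have hh := hg.smooth.sub hg₁.smooth
    obtain ⟨E', hE'⟩ := E.exists_glue hg.smooth hg₁.smooth hκ₁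
      (fun t ↦ hg₁.mul_pos_of_alternatesAt hκ₁ hh halt₁ halt.dropPair)
      (fun t ht ↦ sub_ne_zero.1
        (left_ne_zero_of_mul (hg.mul_pos_of_alternatesAt hh hh halt halt ht).ne'))
    exact ⟨_, hh, halt, E',
      hE'.trans (add_le_add hE (hg.encard_oppositeCrossings_le_one hg₁ halt))⟩

end Zigzag

end Base

section SecondDerivative

variable {f h : ℝ → ℝ} {x : ℕ → ℝ} {a b t₀ : ℝ}

lemma deriv_deriv_nonneg_of_isLocalMin (hf : Continuous f) (hmin : IsLocalMin f t₀) :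
    0 ≤ deriv (deriv f) t₀ := by
  by_contra! hneg
  have hmax := isLocalMax_of_deriv_deriv_neg hneg hmin.deriv_eq_zero hf.continuousAt
  have hconst : f =ᶠ[𝓝 t₀] fun _ ↦ f t₀ := hmin.and hmax |>.mono fun t ht ↦ ht.2.antisymm ht.1
  simp [hconst.deriv.deriv_eq] at hneg

lemma pos_on_Ioo_of_deriv_left_pos (hh : Continuous h) (ha : h a = 0) (hda : 0 < deriv h a)
    (hne : ∀ t ∈ Ioo a b, h t ≠ 0) : ∀ t ∈ Ioo a b, 0 < h t := by
  intro t ht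
  have hright : ∀ᶠ s in 𝓝[>] a, 0 < h s := by
    filter_upwards [nhdsWithin_le_nhds (eventually_nhdsWithin_sign_eq_of_deriv_pos hda ha),
      self_mem_nhdsWithin] with s hs has
    rw [sign_pos (sub_pos.2 has)] at hs
    exact sign_eq_one_iff.1 hs
  obtain ⟨s, hs, hsab⟩ := (hright.and (Ioo_mem_nhdsGT (ht.1.trans ht.2))).exists
  by_contra! hle
  obtain ⟨u, hu, hu₀⟩ := isPreconnected_Ioo.intermediate_value ht hsab hh.continuousOn ⟨hle, hs.le⟩
  exact hne u hu hu₀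

lemma deriv_nonpos_of_pos_on_Ioo (hab : a < b) (hb : h b = 0) (hpos : ∀ t ∈ Ioo a b, 0 < h t) :
    deriv h b ≤ 0 := by
  by_contra! hdb
  have hsign : ∀ᶠ s in 𝓝[<] b, SignType.sign (h s) = SignType.sign (s - b) :=
    nhdsWithin_le_nhds (eventually_nhdsWithin_sign_eq_of_deriv_pos hdb hb)
  obtain ⟨u, hu, hu_mem⟩ := (hsign.and (Ioo_mem_nhdsLT hab)).exists
  rw [sign_neg (sub_neg.2 hu_mem.2), sign_eq_neg_one_iff] at hu
  exact hu.not_gt (hpos u hu_mem)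

lemma neg_one_pow_mul_deriv_pos_of_simple_zeros (hx : StrictMono x) (hh : Continuous h)
    (hzero : ∀ i, h (x i) = 0) (hsimple : ∀ i, deriv h (x i) ≠ 0)
    (hne : ∀ i, ∀ t ∈ Ioo (x i) (x (i + 1)), h t ≠ 0) (hstart : 0 < deriv h (x 0)) (i : ℕ) :
    0 < (-1) ^ i * deriv h (x i) ∧ ∀ t ∈ Ioo (x i) (x (i + 1)), 0 < (-1) ^ i * h t := by
  have harc : ∀ i, 0 < (-1) ^ i * deriv h (x i) →
      ∀ t ∈ Ioo (x i) (x (i + 1)), 0 < (-1) ^ i * h t := fun i hi ↦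
    pos_on_Ioo_of_deriv_left_pos (continuous_const.mul hh) (by rw [hzero, mul_zero])
      (by rwa [deriv_const_mul_field]) fun t ht ↦ mul_ne_zero (by simp) (hne i t ht)
  suffices hpos : 0 < (-1) ^ i * deriv h (x i) from ⟨hpos, harc i hpos⟩
  induction i with
  | zero => simpa using hstart
  | succ i ih =>
    have hle := deriv_nonpos_of_pos_on_Ioo (hx i.lt_succ_self) (by rw [hzero, mul_zero])
      (harc i ih)
    rw [deriv_const_mul_field] at hle
    rw [pow_succ, mul_neg_one, neg_mul, neg_pos]
    exact hle.lt_of_ne (mul_ne_zero (by simp) (hsimple _))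

end SecondDerivative

namespace Ribbon

variable {n : ℕ} (a : Ribbon n)

lemma smoothPeriodic : SmoothPeriodic a.g := ⟨a.smooth_g, a.periodic_g⟩

/-- The angles of the nodes, listed as an infinite increasing sequence that winds around the
circle once every `n` steps. -/
def node (i : ℕ) : ℝ := a.θ ⟨i % n, Nat.mod_lt i a.n_pos⟩ + (i / n : ℕ) * (2 * π)

lemma coe_node (i : ℕ) : (a.node i : Real.Angle) = a.θ ⟨i % n, Nat.mod_lt i a.n_pos⟩ := by
  rw [node, Real.Angle.coe_add, Real.Angle.natCast_mul_eq_nsmul, Real.Angle.coe_two_pi, nsmul_zero,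
    add_zero]

lemma node_add (i : ℕ) : a.node (i + n) = a.node i + 2 * π := by
  simp only [node, Nat.add_mod_right, Nat.add_div_right i a.n_pos]
  push_cast
  ring

lemma node_coe_add_mul (j : Fin n) (m : ℕ) : a.node (j + n * m) = a.θ j + m * (2 * π) := by
  simp only [node, Nat.add_mul_mod_self_left, Nat.add_mul_div_left _ _ a.n_pos,
    Nat.mod_eq_of_lt j.2, Nat.div_eq_of_lt j.2, zero_add]

lemma strictMono_node : StrictMono a.node := by
  refine strictMono_nat_of_lt_succ fun i ↦ ?_
  obtain ⟨j, m, rfl⟩ : ∃ (j : Fin n) (m : ℕ), i = j + n * m :=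
    ⟨⟨i % n, Nat.mod_lt i a.n_pos⟩, i / n, (Nat.mod_add_div i n).symm⟩
  rw [a.node_coe_add_mul]
  rcases Nat.lt_or_ge (j + 1) n with h | h
  · have hsucc := a.node_coe_add_mul ⟨j + 1, h⟩ m
    rw [Nat.add_right_comm, hsucc]
    exact add_lt_add_left (a.theta_mono (Nat.lt_succ_self _)) _
  · have hsucc := a.node_coe_add_mul ⟨0, a.n_pos⟩ (m + 1)
    rw [show (j : ℕ) + n * m + 1 = 0 + n * (m + 1) by rw [Nat.mul_succ]; lia, hsucc]
    push_cast
    linarith [(a.theta_mem j).2, (a.theta_mem ⟨0, a.n_pos⟩).1]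

lemma deriv_node (i : ℕ) : deriv a.g (a.node i) = 0 := by
  rw [a.smoothPeriodic.deriv.apply_eq_of_angle_eq (a.coe_node i), a.node_crit]

lemma deriv_deriv_node_ne_zero (i : ℕ) : deriv (deriv a.g) (a.node i) ≠ 0 := by
  rw [a.smoothPeriodic.deriv.deriv.apply_eq_of_angle_eq (a.coe_node i)]
  exact a.node_nondeg _

lemma exists_node_eq {t : ℝ} (ht : 0 ≤ t) (hderiv : deriv a.g t = 0) : ∃ i, a.node i = t := by
  set m := ⌊t / (2 * π)⌋₊
  have hm_le := (le_div_iff₀ two_pi_pos).1 (Nat.floor_le (div_nonneg ht two_pi_pos.le))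
  have hm_lt := (div_lt_iff₀ two_pi_pos).1 (Nat.lt_floor_add_one (t / (2 * π)))
  obtain ⟨j, hj⟩ := a.crit_only (t - m * (2 * π)) ⟨by linarith, by linarith⟩
    ((a.smoothPeriodic.deriv.periodic.sub_nat_mul_eq m).trans hderiv)
  exact ⟨j + n * m, by rw [a.node_coe_add_mul, ← hj, sub_add_cancel]⟩

lemma deriv_ne_zero_of_mem_Ioo_node {i : ℕ} {t : ℝ} (ht : t ∈ Ioo (a.node i) (a.node (i + 1))) :
    deriv a.g t ≠ 0 := by
  intro hderiv
  have hnonneg : 0 ≤ a.node i := add_nonneg (a.theta_mem _).1 (by positivity)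
  obtain ⟨j, rfl⟩ := a.exists_node_eq (hnonneg.trans ht.1.le) hderiv
  have hij := a.strictMono_node.lt_iff_lt.1 ht.1
  have hji := a.strictMono_node.lt_iff_lt.1 ht.2
  lia

lemma exists_lowest_node : ∃ i, ∀ t, a.g (a.node i) ≤ a.g t := by
  obtain ⟨t₀, ht₀, hmin⟩ := isCompact_Icc.exists_isMinOn (nonempty_Icc.2 two_pi_pos.le)
    a.smoothPeriodic.continuous.continuousOn
  have hglobal : ∀ t, a.g t₀ ≤ a.g t := fun t ↦ by
    obtain ⟨s, hs, hst⟩ := a.periodic_g.exists_mem_Ico₀ two_pi_pos t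
    exact hst ▸ hmin (Ico_subset_Icc_self hs)
  obtain ⟨i, rfl⟩ := a.exists_node_eq ht₀.1
    (IsLocalMin.deriv_eq_zero (Eventually.of_forall hglobal))
  exact ⟨i, hglobal⟩

lemma exists_zigzag {k : ℕ} (hn : n = 2 * k) :
    ∃ x, Zigzag k a.g x ∧ AlternatesAt x k fun t ↦ -deriv (deriv a.g) t := by
  obtain ⟨i₀, hlow⟩ := a.exists_lowest_node
  have hmin : ∀ t, a.g t = a.g (a.node i₀) → 0 ≤ deriv (deriv a.g) t := fun t ht ↦
    deriv_deriv_nonneg_of_isLocalMin a.smoothPeriodic.continuous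
      (Eventually.of_forall fun s ↦ ht.trans_le (hlow s))
  have hx : StrictMono fun i ↦ a.node (i₀ + i) := fun i j hij ↦
    a.strictMono_node (Nat.add_lt_add_left hij i₀)
  have hsign := neg_one_pow_mul_deriv_pos_of_simple_zeros hx a.smoothPeriodic.deriv.continuous
    (fun _ ↦ a.deriv_node _) (fun _ ↦ a.deriv_deriv_node_ne_zero _)
    (fun _ _ ↦ a.deriv_ne_zero_of_mem_Ioo_node)
    ((hmin _ rfl).lt_of_ne' (a.deriv_deriv_node_ne_zero _))
  refine ⟨fun i ↦ a.node (i₀ + i), ⟨a.smoothPeriodic, hx, hn ▸ a.node_add i₀,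
    fun i _ ↦ (hsign i).2, fun i _ hodd ↦ (hlow _).lt_of_ne fun heq ↦ ?_⟩, fun i _ ↦ ?_⟩
  · have hneg := (hsign i).1
    rw [hodd.neg_one_pow, neg_one_mul, neg_pos] at hneg
    exact (hmin _ heq.symm).not_gt hneg
  · rw [mul_neg, neg_neg_iff_pos]
    exact (hsign i).1

end Ribbon

namespace CollarExtension

section Boundary

variable {g κ : ℝ → ℝ} (E : CollarExtension g κ)

lemma apply_sphPt (t : ℝ) : E.toFun (sphPt t) = g t := by
  simpa [E.β_one] using E.polar_eq 1 E.r₀_lt_one t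

lemma fderiv_sphPt_radial (t : ℝ) :
    fderiv ℝ E.toFun (sphPt t) (sphPt t) = deriv E.β 1 * κ t := by
  have hradial := hasDerivAt_comp_smul_sphPt_radial (r := 1) (t := t)
    (E.contDiff.differentiable (by simp) _)
  rw [one_smul] at hradial
  have hpolar : HasDerivAt (fun r ↦ g t + E.β r * κ t) (deriv E.β 1 * κ t) 1 :=
    ((E.contDiff_β.differentiable (by simp) 1).hasDerivAt.mul_const _).const_add _
  refine hradial.unique (hpolar.congr_of_eventuallyEq ?_)
  filter_upwards [lt_mem_nhds E.r₀_lt_one] with r hr using E.polar_eq r hr t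

lemma fderiv_sphPt_ne_zero {t : ℝ} (ht : deriv g t = 0 → κ t ≠ 0) :
    fderiv ℝ E.toFun (sphPt t) ≠ 0 := by
  intro hzero
  have hangular := hasDerivAt_comp_smul_sphPt_angular (r := 1) (t := t)
    (E.contDiff.differentiable (by simp) _)
  simp only [one_smul, E.apply_sphPt, hzero, zero_apply] at hangular
  have hradial := E.fderiv_sphPt_radial t
  rw [hzero, zero_apply, eq_comm] at hradial
  exact mul_ne_zero (E.deriv_β_pos 1 ⟨E.r₀_lt_one, le_rfl⟩).ne' (ht hangular.deriv) hradial

end Boundary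

lemma isExtension {n : ℕ} {a : Ribbon n} {κ : ℝ → ℝ} (E : CollarExtension a.g κ)
    (hν : ∀ i, a.ν i = 1) (hκ : ∀ t, deriv a.g t = 0 → 0 < κ t * -deriv (deriv a.g) t) :
    IsExtension a E.toFun := by
  have hβ : 0 < deriv E.β 1 := E.deriv_β_pos 1 ⟨E.r₀_lt_one, le_rfl⟩
  refine ⟨E.contDiff, E.apply_sphPt, fun x hx ↦ ?_, fun i ↦ ?_⟩
  · rw [← norm_smul_sphPt_polarAngle x, mem_sphere_zero_iff_norm.1 hx, one_smul]
    exact E.fderiv_sphPt_ne_zero fun ht ↦ left_ne_zero_of_mul (hκ _ ht).ne'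
  · have hnode := hκ (a.θ i) (a.node_crit i)
    rw [hν i, Int.cast_one, one_mul, gradient, InnerProductSpace.toDual_symm_apply,
      E.fderiv_sphPt_radial]
    exact ⟨fun hmax ↦ mul_pos hβ (pos_of_mul_pos_left hnode (neg_pos.2 hmax).le),
      fun hmin ↦ mul_neg_of_pos_of_neg hβ (neg_of_mul_pos_left hnode (neg_neg_of_pos hmin).le)⟩

end CollarExtension

lemma Ribbon.exists_isExtension {n k : ℕ} (a : Ribbon n) (hν : ∀ i, a.ν i = 1)
    (hn : n = 2 * (k + 1)) : ∃ f, IsExtension a f ∧ (critPts f).encard ≤ k := by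
  obtain ⟨x, hg, hsecond⟩ := a.exists_zigzag hn
  obtain ⟨κ, hκ, halt, E, hE⟩ := hg.exists_collarExtension
  have hsmooth : SmoothPeriodic fun t ↦ -deriv (deriv a.g) t :=
    ⟨hg.smooth.deriv.deriv.contDiff.neg, fun t ↦ by simp only [hg.smooth.deriv.deriv.periodic t]⟩
  exact ⟨E.toFun, E.isExtension hν fun t ↦ hg.mul_pos_of_alternatesAt hκ hsmooth halt hsecond, hE⟩

/-- If all nodes of a ribbon `a` with `n` nodes are positive, then there is an extension of `a`
with at most `n/2 − 1` critical points in the open unit disk; that is, `γ(a) ≤ n/2 − 1`. -/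
theorem stmt_2 (n : ℕ) (a : Ribbon n) (hpos : ∀ i, a.ν i = 1) :
    (∃ f : E2 → ℝ, IsExtension a f ∧ (critPts f).encard ≤ ((n / 2 - 1 : ℕ) : ℕ∞)) ∧
    gammaR a ≤ ((n / 2 - 1 : ℕ) : ℕ∞) := by
  obtain ⟨k, hn⟩ : ∃ k, n = 2 * (k + 1) := by
    obtain ⟨m, rfl⟩ := a.n_even
    have := a.n_pos
    exact ⟨m - 1, by lia⟩
  have hk : n / 2 - 1 = k := by lia
  obtain ⟨f, hf, hcard⟩ := a.exists_isExtension hpos hn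
  rw [hk]
  exact ⟨⟨f, hf, hcard⟩, le_trans (sInf_le ⟨f, hf, rfl⟩) hcard⟩
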